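/- arXiv:2302.03363 — 3 statements merged into one kernel-verified Lean document; each statement's English description precedes it below -/
import Mathlib

section
/- Let α, β, γ be real numbers with α > -1/2, α + β + γ > -3/2, and γ = −1/2. Define, for t ≥ 1, F(t) = ∫₀¹ s^{2α} (∫ₛ¹ u^β (u−s)^γ du) (∫ₜ^{t+1} v^β (v−s)^γ dv) ds, V(t) = ∫₀^{t+1} s^{2α} (∫_{max(s,t)}^{t+1} u^β (u−s)^γ du)² ds, C = ∫₀¹ s^{2α} (∫ₛ¹ u^β (u−s)^γ du)² ds, and r(t) = F(t) / (√C · √V(t)). Then there exists a constant c > 0 (depending on α, β, γ) such that lim_{t→+∞} t^{α+1/2} √(log t) · r(t) = c. -/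
open MeasureTheory Filter intervalIntegral
open Set Asymptotics

/-!
Write `k (a, b, s) = ∫ u in a..b, u ^ β * (u - s) ^ γ`. On `[t, t + 1]` the integrand is
`t ^ (β + γ)` up to a factor tending to `1` uniformly in `s ∈ [0, 1]`, so
`F t ~ A * t ^ (β - 1 / 2)` with `A = ∫ s in 0..1, s ^ (2 * α) * k (s, 1, s)`.

In `V t` the factor `u ^ β` may likewise be replaced by `t ^ β`, and with `T = t + 1` what remains
is `∫ s in 0..T, s ^ (2 * α) * φ (T - s)`, where `φ x = (2 * (√x - √(x - 1)₊)) ^ 2` behaves like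
`1 / x`. Since `|s ^ p - T ^ p| ≤ (T - s) / T * (s ^ p + (p + 2) * T ^ p)` and `x * φ x` is bounded,
replacing `s ^ (2 * α)` by `T ^ (2 * α)` costs only `O (T ^ (2 * α))`. As
`∫ x in 0..T, φ x ~ log T`, the integral is `~ T ^ (2 * α) * log T`: this is the source of the
logarithm.
-/

section

variable {ι : Type*} {l : Filter ι} {f g v : ι → ℝ}

theorem isEquivalent_of_eventually_mem_uIcc {h : ι → ℝ} (hf : f ~[l] v) (hh : h ~[l] v)
    (hg : ∀ᶠ x in l, g x ∈ uIcc (f x) (h x)) : g ~[l] v := by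
  have hgf : (g - f) =O[l] (h - f) :=
    IsBigO.of_bound 1 <| hg.mono fun x hx => by
      simpa using! abs_sub_left_of_mem_uIcc hx
  have hhf : (h - f) =o[l] v :=
    (hh.isLittleO.sub hf.isLittleO).congr_left fun _ => sub_sub_sub_cancel_right _ _ _
  simpa only [sub_add_cancel] using (hgf.trans_isLittleO hhf).add_isEquivalent hf

theorem isEquivalent_min (hf : f ~[l] v) (hg : g ~[l] v) :
    (fun x => min (f x) (g x)) ~[l] v :=
  isEquivalent_of_eventually_mem_uIcc hf hg <| .of_forall fun _ => ⟨le_rfl, inf_le_sup⟩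

theorem isEquivalent_max (hf : f ~[l] v) (hg : g ~[l] v) :
    (fun x => max (f x) (g x)) ~[l] v :=
  isEquivalent_of_eventually_mem_uIcc hf hg <| .of_forall fun _ => ⟨inf_le_sup, le_rfl⟩

theorem isEquivalent_rpow (hg : 0 ≤ᶠ[l] g) (hfg : f ~[l] g) (p : ℝ) :
    (fun x => f x ^ p) ~[l] fun x => g x ^ p := by
  have hmax : (fun x => max 0 (g x)) =ᶠ[l] g := hg.mono fun x hx => max_eq_right hx
  refine ((hfg.congr_right hmax.symm).rpow (fun x => le_max_left _ _)).congr_right ?_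
  exact hmax.mono fun x hx => congrArg (· ^ p) hx

theorem isEquivalent_sqrt (hg : 0 ≤ᶠ[l] g) (hfg : f ~[l] g) :
    (fun x => √(f x)) ~[l] fun x => √(g x) := by
  simpa only [Real.sqrt_eq_rpow] using isEquivalent_rpow hg hfg (1 / 2)

end

theorem isEquivalent_add_const (a : ℝ) : (fun t : ℝ => t + a) ~[atTop] fun t => t :=
  IsEquivalent.refl.add_const_of_norm_tendsto_atTop tendsto_norm_atTop_atTop

theorem isEquivalent_add_const_rpow (a p : ℝ) :
    (fun t : ℝ => (t + a) ^ p) ~[atTop] fun t => t ^ p :=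
  isEquivalent_rpow (eventually_ge_atTop 0) (isEquivalent_add_const a) p

theorem rpow_mem_uIcc {a b x : ℝ} (ha : 0 < a) (hx : x ∈ Icc a b) (p : ℝ) :
    x ^ p ∈ uIcc (a ^ p) (b ^ p) := by
  rcases le_total 0 p with hp | hp
  · exact Icc_subset_uIcc ⟨Real.rpow_le_rpow ha.le hx.1 hp,
      Real.rpow_le_rpow (ha.le.trans hx.1) hx.2 hp⟩
  · exact Icc_subset_uIcc' ⟨Real.rpow_le_rpow_of_nonpos (ha.trans_le hx.1) hx.2 hp,
      Real.rpow_le_rpow_of_nonpos ha hx.1 hp⟩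

theorem integral_mem_Icc_mul_integral {μ : Measure ℝ} [NullSingletonClass μ] {f g : ℝ → ℝ}
    {a b l m : ℝ} (hab : a ≤ b) (hf : Measurable f) (hg : IntervalIntegrable g μ a b)
    (hfg : ∀ x ∈ Ioo a b, f x ∈ Icc (l * g x) (m * g x)) :
    ∫ x in a..b, f x ∂μ ∈ Icc (l * ∫ x in a..b, g x ∂μ) (m * ∫ x in a..b, g x ∂μ) := by
  have hfi : IntervalIntegrable f μ a b := by
    rw [intervalIntegrable_iff_integrableOn_Ioo_of_le hab] at hg ⊢
    have hae := ae_restrict_of_forall_mem (μ := μ) measurableSet_Ioo hfg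
    exact integrable_of_le_of_le hf.aestronglyMeasurable (hae.mono fun x hx => hx.1)
      (hae.mono fun x hx => hx.2) (hg.const_mul l) (hg.const_mul m)
  simp only [← intervalIntegral.integral_const_mul]
  exact ⟨integral_mono_on_of_le_Ioo hab (hg.const_mul l) hfi fun x hx => (hfg x hx).1,
    integral_mono_on_of_le_Ioo hab hfi (hg.const_mul m) fun x hx => (hfg x hx).2⟩

theorem measurable_intervalIntegral {X : Type*} [MeasurableSpace X] {k : X → ℝ → ℝ} {a b : X → ℝ}
    {μ : Measure ℝ} [SFinite μ] (hk : Measurable (Function.uncurry k)) (ha : Measurable a)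
    (hb : Measurable b) : Measurable fun x => ∫ u in a x..b x, k x u ∂μ := by
  have measurable_setIntegral_Ioc : ∀ {a b : X → ℝ}, Measurable a → Measurable b →
      Measurable fun x => ∫ u in Ioc (a x) (b x), k x u ∂μ := by
    intro a b ha hb
    have hs : MeasurableSet {z : X × ℝ | a z.1 < z.2 ∧ z.2 ≤ b z.1} :=
      (measurableSet_lt (ha.comp measurable_fst) measurable_snd).inter
        (measurableSet_le measurable_snd (hb.comp measurable_fst))
    simp only [← MeasureTheory.integral_indicator measurableSet_Ioc]
    exact (hk.indicator hs).stronglyMeasurable.integral_prod_right'.measurable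
  exact (measurable_setIntegral_Ioc ha hb).sub (measurable_setIntegral_Ioc hb ha)

theorem intervalIntegrable_sub_rpow {γ : ℝ} (hγ : -1 < γ) (s a b : ℝ) :
    IntervalIntegrable (fun u => (u - s) ^ γ) volume a b := by
  simpa only [sub_add_cancel] using
    (intervalIntegral.intervalIntegrable_rpow' hγ (a := a - s) (b := b - s)).comp_sub_right s

/-- The inner integral of the Gaussian Volterra process `X`. With `a = max s t`, its product with
`s ^ α` is the kernel of the increment `X b - X t`. -/
noncomputable def volterraKernel (β γ a b s : ℝ) : ℝ :=
  ∫ u in a..b, u ^ β * (u - s) ^ γ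

theorem measurable_volterraKernel (β γ : ℝ) {a b : ℝ → ℝ} (ha : Measurable a)
    (hb : Measurable b) : Measurable fun s => volterraKernel β γ (a s) (b s) s :=
  measurable_intervalIntegral (by unfold Function.uncurry; fun_prop) ha hb

theorem intervalIntegrable_rpow_mul_sub_rpow {β γ s a b : ℝ} (hγ : -1 < γ) (ha : 0 < a)
    (hab : a ≤ b) : IntervalIntegrable (fun u => u ^ β * (u - s) ^ γ) volume a b := by
  refine (intervalIntegrable_sub_rpow hγ s a b).continuousOn_mul ?_
  rw [uIcc_of_le hab]
  exact continuousOn_id.rpow_const fun u hu => Or.inl (ha.trans_le hu.1).ne'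

theorem volterraKernel_nonneg {β γ s b : ℝ} (hs : 0 ≤ s) (hsb : s ≤ b) :
    0 ≤ volterraKernel β γ s b s :=
  intervalIntegral.integral_nonneg hsb fun _ hu =>
    mul_nonneg (Real.rpow_nonneg (hs.trans hu.1) _) (Real.rpow_nonneg (sub_nonneg.2 hu.1) _)

theorem volterraKernel_pos {β γ s b : ℝ} (hγ : -1 < γ) (hs : 0 < s) (hsb : s < b) :
    0 < volterraKernel β γ s b s :=
  intervalIntegral_pos_of_pos_on (intervalIntegrable_rpow_mul_sub_rpow hγ hs hsb.le)
    (fun _ hu => mul_pos (Real.rpow_pos_of_pos (hs.trans hu.1) _)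
      (Real.rpow_pos_of_pos (sub_pos.2 hu.1) _)) hsb

theorem integral_sub_rpow_sub_one {ε : ℝ} (hε : 0 < ε) (s b : ℝ) :
    ∫ u in s..b, (u - s) ^ (ε - 1) = (b - s) ^ ε / ε := by
  rw [intervalIntegral.integral_comp_sub_right (fun u => u ^ (ε - 1)) s,
    integral_rpow (Or.inl (by linarith)), sub_self, sub_add_cancel, Real.zero_rpow hε.ne', sub_zero]

theorem volterraKernel_le_rpow_neg_mul_inv {β γ ε q s : ℝ} (hε : 0 < ε) (hεγ : ε ≤ γ + 1)
    (hq : 0 ≤ q) (hβq : ε ≤ β + q + γ + 1) (hs : 0 < s) (hs1 : s ≤ 1) :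
    volterraKernel β γ s 1 s ≤ s ^ (-q) * ε⁻¹ := by
  -- `0 < u - s ≤ u ≤ 1` lets the exponents of `u` and `u - s` be merged, into one above `-1`.
  have integrand_le : ∀ u ∈ Ioo s 1, u ^ β * (u - s) ^ γ ≤ s ^ (-q) * (u - s) ^ (ε - 1) := by
    intro u hu
    have hu0 : 0 < u := hs.trans hu.1
    have hus : 0 < u - s := sub_pos.2 hu.1
    calc u ^ β * (u - s) ^ γ = u ^ (-q) * u ^ (β + q) * (u - s) ^ γ := by
          rw [← Real.rpow_add hu0, neg_add_cancel_comm_assoc]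
      _ ≤ s ^ (-q) * (u - s) ^ (ε - 1 - γ) * (u - s) ^ γ := by
          gcongr ?_ * ?_ * _
          · exact Real.rpow_le_rpow_of_nonpos hs hu.1.le (neg_nonpos.2 hq)
          · exact (Real.rpow_le_rpow_of_exponent_ge hu0 hu.2.le (by linarith)).trans
              (Real.rpow_le_rpow_of_nonpos hus (by linarith) (by linarith))
      _ = s ^ (-q) * (u - s) ^ (ε - 1) := by
          rw [mul_assoc, ← Real.rpow_add hus, sub_add_cancel]
  calc volterraKernel β γ s 1 s ≤ ∫ u in s..1, s ^ (-q) * (u - s) ^ (ε - 1) :=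
        integral_mono_on_of_le_Ioo hs1
          (intervalIntegrable_rpow_mul_sub_rpow (by linarith) hs hs1)
          ((intervalIntegrable_sub_rpow (by linarith) s s 1).const_mul _) integrand_le
    _ = s ^ (-q) * ((1 - s) ^ ε / ε) := by
        rw [intervalIntegral.integral_const_mul, integral_sub_rpow_sub_one hε]
    _ ≤ s ^ (-q) * ε⁻¹ := by
        rw [← one_div]
        gcongr
        exact Real.rpow_le_one (by linarith) (by linarith) hε.le

theorem exists_volterraKernel_le_mul_rpow_neg {α β γ : ℝ} (hα : -(1 / 2) < α) (hγ : -1 < γ)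
    (hαβγ : -(3 / 2) < α + β + γ) :
    ∃ q < α + 1 / 2, ∃ K, ∀ s ∈ Ioc (0 : ℝ) 1, volterraKernel β γ s 1 s ≤ K * s ^ (-q) := by
  obtain ⟨ε, hε, hε'⟩ := exists_between
    (lt_min (by linarith : 0 < γ + 1) (by linarith : 0 < α + β + γ + 3 / 2))
  rw [lt_min_iff] at hε'
  refine ⟨max 0 (ε - 1 - β - γ), max_lt (by linarith) (by linarith), ε⁻¹, fun s hs => ?_⟩
  rw [mul_comm]
  refine volterraKernel_le_rpow_neg_mul_inv hε hε'.1.le (le_max_left _ _) ?_ hs.1 hs.2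
  linarith [le_max_right 0 (ε - 1 - β - γ)]

theorem intervalIntegrable_rpow_mul_volterraKernel_pow {α β γ : ℝ} {n : ℕ} (hn : n ≤ 2)
    (hα : -(1 / 2) < α) (hγ : -1 < γ) (hαβγ : -(3 / 2) < α + β + γ) :
    IntervalIntegrable (fun s => s ^ (2 * α) * volterraKernel β γ s 1 s ^ n) volume 0 1 := by
  obtain ⟨q, hq, K, hK⟩ := exists_volterraKernel_le_mul_rpow_neg hα hγ hαβγ
  have hexp : -1 < 2 * α + -q * n := by interval_cases n <;> push_cast <;> linarith
  refine ((intervalIntegral.intervalIntegrable_rpow' hexp).const_mul (K ^ n)).mono_fun' ?_ ?_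
  · have hmeas := measurable_volterraKernel β γ measurable_id measurable_const (b := fun _ => 1)
    exact Measurable.aestronglyMeasurable (by fun_prop)
  · rw [uIoc_of_le zero_le_one]
    refine ae_restrict_of_forall_mem measurableSet_Ioc fun s hs => ?_
    have hs0 : 0 < s := hs.1
    have hker : 0 ≤ volterraKernel β γ s 1 s := volterraKernel_nonneg hs0.le hs.2
    calc ‖s ^ (2 * α) * volterraKernel β γ s 1 s ^ n‖
        = s ^ (2 * α) * volterraKernel β γ s 1 s ^ n := Real.norm_of_nonneg (by positivity)
      _ ≤ s ^ (2 * α) * (K * s ^ (-q)) ^ n := by gcongr; exact hK s hs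
      _ = K ^ n * s ^ (2 * α + -q * n) := by
          rw [Real.rpow_add hs0, Real.rpow_mul_natCast hs0.le]; ring

theorem integral_rpow_mul_volterraKernel_pow_pos {α β γ : ℝ} {n : ℕ} (hn : n ≤ 2)
    (hα : -(1 / 2) < α) (hγ : -1 < γ) (hαβγ : -(3 / 2) < α + β + γ) :
    0 < ∫ s in (0 : ℝ)..1, s ^ (2 * α) * volterraKernel β γ s 1 s ^ n :=
  intervalIntegral_pos_of_pos_on
    (intervalIntegrable_rpow_mul_volterraKernel_pow hn hα hγ hαβγ)
    (fun _ hs => mul_pos (Real.rpow_pos_of_pos hs.1 _)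
      (pow_pos (volterraKernel_pos hγ hs.1 hs.2) n)) zero_lt_one

theorem volterraKernel_mem_Icc_mul_integral {β γ s a b l m : ℝ} (hγ : -1 < γ) (hsa : s ≤ a)
    (hab : a ≤ b) (hlm : ∀ u ∈ Icc a b, u ^ β ∈ Icc l m) :
    volterraKernel β γ a b s ∈
      Icc (l * ∫ u in a..b, (u - s) ^ γ) (m * ∫ u in a..b, (u - s) ^ γ) := by
  refine integral_mem_Icc_mul_integral hab (by fun_prop) (intervalIntegrable_sub_rpow hγ s a b)
    fun u hu => ?_
  have husγ : 0 ≤ (u - s) ^ γ := Real.rpow_nonneg (by linarith [hu.1]) γ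
  obtain ⟨hl, hm⟩ := hlm u (Ioo_subset_Icc_self hu)
  exact ⟨by gcongr, by gcongr⟩

theorem volterraKernel_mem_Icc_mul_rpow {β γ t s : ℝ} (ht : 1 < t) (hs : s ∈ Icc (0 : ℝ) 1) :
    volterraKernel β γ t (t + 1) s ∈
      Icc (min (t ^ β) ((t + 1) ^ β) * min ((t - 1) ^ γ) ((t + 1) ^ γ))
        (max (t ^ β) ((t + 1) ^ β) * max ((t - 1) ^ γ) ((t + 1) ^ γ)) := by
  have ht0 : 0 < t := by linarith
  have ht1 : 0 < t - 1 := by linarith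
  have hmem : ∀ u ∈ Ioo t (t + 1), u ^ β * (u - s) ^ γ ∈
      Icc (min (t ^ β) ((t + 1) ^ β) * min ((t - 1) ^ γ) ((t + 1) ^ γ) * 1)
        (max (t ^ β) ((t + 1) ^ β) * max ((t - 1) ^ γ) ((t + 1) ^ γ) * 1) := by
    intro u hu
    have hu0 : 0 < u := ht0.trans hu.1
    obtain ⟨hβ, hβ'⟩ := rpow_mem_uIcc ht0 (Ioo_subset_Icc_self hu) β
    obtain ⟨hγ, hγ'⟩ := rpow_mem_uIcc (x := u - s) (b := t + 1) ht1
      ⟨by linarith [hu.1, hs.2], by linarith [hu.2, hs.1]⟩ γ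
    rw [mul_one, mul_one]
    exact ⟨mul_le_mul hβ hγ (by positivity) (by positivity),
      mul_le_mul hβ' hγ' (Real.rpow_nonneg (by linarith [hu.1, hs.2]) γ) (by positivity)⟩
  simpa using! integral_mem_Icc_mul_integral (by linarith) (by fun_prop)
    (intervalIntegrable_const (μ := volume)) hmem

theorem isEquivalent_integral_mul_volterraKernel {f : ℝ → ℝ} (hf : Measurable f)
    (hfi : IntervalIntegrable f volume 0 1) (hf0 : ∀ s ∈ Ioo (0 : ℝ) 1, 0 ≤ f s) (β γ : ℝ) :
    (fun t => ∫ s in (0 : ℝ)..1, f s * volterraKernel β γ t (t + 1) s) ~[atTop]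
      fun t => t ^ β * t ^ γ * ∫ s in (0 : ℝ)..1, f s := by
  have htβ : (fun t : ℝ => t ^ β) ~[atTop] fun t => t ^ β := IsEquivalent.refl
  have hpredγ : (fun t : ℝ => (t - 1) ^ γ) ~[atTop] fun t => t ^ γ := by
    simpa only [sub_eq_add_neg] using isEquivalent_add_const_rpow (-1) γ
  have hsuccβ := isEquivalent_add_const_rpow 1 β
  have hsuccγ := isEquivalent_add_const_rpow 1 γ
  refine isEquivalent_of_eventually_mem_uIcc
    (((isEquivalent_min htβ hsuccβ).mul (isEquivalent_min hpredγ hsuccγ)).mul IsEquivalent.refl)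
    (((isEquivalent_max htβ hsuccβ).mul (isEquivalent_max hpredγ hsuccγ)).mul IsEquivalent.refl) ?_
  filter_upwards [eventually_gt_atTop 1] with t ht
  have hmeas := measurable_volterraKernel β γ (measurable_const (a := t))
    (measurable_const (a := t + 1))
  refine Icc_subset_uIcc
    (integral_mem_Icc_mul_integral zero_le_one (by fun_prop) hfi fun s hs => ?_)
  obtain ⟨hl, hm⟩ := volterraKernel_mem_Icc_mul_rpow (β := β) (γ := γ) ht (Ioo_subset_Icc_self hs)
  simp only [mul_comm (f s)]
  exact ⟨mul_le_mul_of_nonneg_right hl (hf0 s hs), mul_le_mul_of_nonneg_right hm (hf0 s hs)⟩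

theorem isEquivalent_integral_volterraKernel_mul_volterraKernel {α β γ : ℝ} (hα : -(1 / 2) < α)
    (hγ : -1 < γ) (hαβγ : -(3 / 2) < α + β + γ) :
    (fun t => ∫ s in (0 : ℝ)..1,
        s ^ (2 * α) * volterraKernel β γ s 1 s * volterraKernel β γ t (t + 1) s) ~[atTop]
      fun t => t ^ β * t ^ γ * ∫ s in (0 : ℝ)..1, s ^ (2 * α) * volterraKernel β γ s 1 s := by
  have hmeas : Measurable fun s => s ^ (2 * α) * volterraKernel β γ s 1 s :=
    Measurable.mul (by fun_prop) (measurable_volterraKernel β γ measurable_id measurable_const)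
  have hint : IntervalIntegrable (fun s => s ^ (2 * α) * volterraKernel β γ s 1 s) volume 0 1 := by
    simpa only [pow_one] using
      intervalIntegrable_rpow_mul_volterraKernel_pow one_le_two hα hγ hαβγ
  exact isEquivalent_integral_mul_volterraKernel hmeas hint (fun s hs =>
    mul_nonneg (Real.rpow_nonneg hs.1.le _) (volterraKernel_nonneg hs.1.le hs.2.le)) β γ

theorem one_sub_mul_le_rpow {q x : ℝ} (hq : 0 ≤ q) (hx : 0 < x) (hx1 : x ≤ 1) :
    1 - (q + 1) * (1 - x) ≤ x ^ q := by
  calc 1 - (q + 1) * (1 - x) = 1 + (q + 1) * (x - 1) := by ring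
    _ ≤ (1 + (x - 1)) ^ (q + 1) := one_add_mul_self_le_rpow_one_add (by linarith) (by linarith)
    _ = x ^ (q + 1) := by rw [add_sub_cancel]
    _ ≤ x ^ q := Real.rpow_le_rpow_of_exponent_ge hx hx1 (by linarith)

theorem abs_rpow_sub_one_le {p x : ℝ} (hp : -1 ≤ p) (hx : 0 < x) (hx1 : x ≤ 1) :
    |x ^ p - 1| ≤ (1 - x) * (x ^ p + (p + 2)) := by
  have hxp : 0 < x ^ p := Real.rpow_pos_of_pos hx p
  have hsucc : x ^ (p + 1) = x ^ p * x := Real.rpow_add_one hx.ne' p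
  have hlower := one_sub_mul_le_rpow (q := p + 1) (by linarith) hx hx1
  have hupper : x ^ (p + 1) ≤ 1 := Real.rpow_le_one hx.le hx1 (by linarith)
  rw [hsucc] at hlower hupper
  rw [abs_le]
  constructor <;> nlinarith

theorem mul_abs_rpow_sub_rpow_le {p s T : ℝ} (hp : -1 ≤ p) (hs : 0 < s) (hsT : s ≤ T) :
    T * |s ^ p - T ^ p| ≤ (T - s) * (s ^ p + (p + 2) * T ^ p) := by
  have hT : 0 < T := hs.trans_le hsT
  have hTp : 0 < T ^ p := Real.rpow_pos_of_pos hT p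
  have hratio := abs_rpow_sub_one_le hp (div_pos hs hT) ((div_le_one hT).2 hsT)
  rw [Real.div_rpow hs.le hT.le] at hratio
  calc T * |s ^ p - T ^ p| = T * T ^ p * |s ^ p / T ^ p - 1| := by
        rw [mul_assoc, ← abs_of_pos hTp, ← abs_mul, abs_of_pos hTp, mul_sub,
          mul_div_cancel₀ _ hTp.ne', mul_one]
    _ ≤ T * T ^ p * ((1 - s / T) * (s ^ p / T ^ p + (p + 2))) := by gcongr
    _ = (T - s) * (s ^ p + (p + 2) * T ^ p) := by field_simp

theorem integral_rpow_add_const_mul_rpow {p T : ℝ} (hp : -1 < p) (hT : 0 < T) (c : ℝ) :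
    ∫ s in (0 : ℝ)..T, (s ^ p + c * T ^ p) = T * (((p + 1)⁻¹ + c) * T ^ p) := by
  rw [intervalIntegral.integral_add (intervalIntegral.intervalIntegrable_rpow' hp)
    intervalIntegrable_const, integral_rpow (Or.inl hp), intervalIntegral.integral_const,
    Real.zero_rpow (by linarith), Real.rpow_add_one hT.ne', smul_eq_mul]
  ring

theorem abs_rpow_sub_rpow_mul_abs_le {p s T M y : ℝ} (hp : -1 ≤ p) (hs : s ∈ Ioc 0 T)
    (hy : (T - s) * |y| ≤ M) :
    |s ^ p - T ^ p| * |y| ≤ M / T * (s ^ p + (p + 2) * T ^ p) := by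
  have hT : 0 < T := hs.1.trans_le hs.2
  have hsum : 0 ≤ s ^ p + (p + 2) * T ^ p :=
    add_nonneg (Real.rpow_nonneg hs.1.le p) (mul_nonneg (by linarith) (Real.rpow_nonneg hT.le p))
  rw [div_mul_eq_mul_div, le_div_iff₀ hT]
  calc |s ^ p - T ^ p| * |y| * T = T * |s ^ p - T ^ p| * |y| := by ring
    _ ≤ (T - s) * (s ^ p + (p + 2) * T ^ p) * |y| :=
        mul_le_mul_of_nonneg_right (mul_abs_rpow_sub_rpow_le hp hs.1 hs.2) (abs_nonneg y)
    _ = (T - s) * |y| * (s ^ p + (p + 2) * T ^ p) := by ring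
    _ ≤ M * (s ^ p + (p + 2) * T ^ p) := mul_le_mul_of_nonneg_right hy hsum

theorem abs_integral_rpow_mul_comp_sub_sub_le {p T M : ℝ} {φ : ℝ → ℝ} (hp : -1 < p) (hT : 0 < T)
    (hφ : IntervalIntegrable φ volume 0 T) (hM : ∀ x ∈ Ico 0 T, x * |φ x| ≤ M) :
    |(∫ s in (0 : ℝ)..T, s ^ p * φ (T - s)) - T ^ p * ∫ x in (0 : ℝ)..T, φ x| ≤
      M * ((p + 1)⁻¹ + (p + 2)) * T ^ p := by
  have hφ' : IntervalIntegrable (fun s => φ (T - s)) volume 0 T := by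
    simpa only [sub_zero, sub_self] using (hφ.comp_sub_left T).symm
  have hdom : IntervalIntegrable (fun s : ℝ => M / T * (s ^ p + (p + 2) * T ^ p)) volume 0 T :=
    ((intervalIntegral.intervalIntegrable_rpow' hp).add intervalIntegrable_const).const_mul _
  have hbound : ∀ s ∈ Ioc 0 T,
      ‖(s ^ p - T ^ p) * φ (T - s)‖ ≤ M / T * (s ^ p + (p + 2) * T ^ p) := fun s hs => by
    rw [Real.norm_eq_abs, abs_mul]
    exact abs_rpow_sub_rpow_mul_abs_le hp.le hs
      (hM (T - s) ⟨sub_nonneg.2 hs.2, sub_lt_self T hs.1⟩)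
  have hdiff : IntervalIntegrable (fun s => (s ^ p - T ^ p) * φ (T - s)) volume 0 T := by
    refine hdom.mono_fun' ?_ ?_
    · rw [uIoc_of_le hT.le]
      exact AEStronglyMeasurable.mul (by fun_prop) hφ'.aestronglyMeasurable
    · rw [uIoc_of_le hT.le]
      exact ae_restrict_of_forall_mem measurableSet_Ioc hbound
  have hsplit : (∫ s in (0 : ℝ)..T, s ^ p * φ (T - s)) =
      (∫ s in (0 : ℝ)..T, (s ^ p - T ^ p) * φ (T - s)) + T ^ p * ∫ x in (0 : ℝ)..T, φ x := by
    have hreflect : ∫ s in (0 : ℝ)..T, φ (T - s) = ∫ x in (0 : ℝ)..T, φ x := by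
      rw [intervalIntegral.integral_comp_sub_left, sub_self, sub_zero]
    rw [← hreflect, ← intervalIntegral.integral_const_mul,
      ← intervalIntegral.integral_add hdiff (hφ'.const_mul _)]
    simp only [← add_mul, sub_add_cancel]
  rw [hsplit, add_sub_cancel_right, ← Real.norm_eq_abs]
  calc ‖∫ s in (0 : ℝ)..T, (s ^ p - T ^ p) * φ (T - s)‖
      ≤ ∫ s in (0 : ℝ)..T, M / T * (s ^ p + (p + 2) * T ^ p) :=
        intervalIntegral.norm_integral_le_of_norm_le hT.le (ae_of_all _ hbound) hdom
    _ = M * ((p + 1)⁻¹ + (p + 2)) * T ^ p := by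
        rw [intervalIntegral.integral_const_mul, integral_rpow_add_const_mul_rpow hp hT]
        field_simp

theorem isEquivalent_integral_rpow_mul_comp_sub {p M : ℝ} {φ : ℝ → ℝ} (hp : -1 < p)
    (hφ : ∀ T, IntervalIntegrable φ volume 0 T) (hM : ∀ x, 0 ≤ x → x * |φ x| ≤ M)
    (hlim : Tendsto (fun T => ∫ x in (0 : ℝ)..T, φ x) atTop atTop) :
    (fun T => ∫ s in (0 : ℝ)..T, s ^ p * φ (T - s)) ~[atTop]
      fun T => T ^ p * ∫ x in (0 : ℝ)..T, φ x := by
  have hO : (fun T => (∫ s in (0 : ℝ)..T, s ^ p * φ (T - s)) - T ^ p * ∫ x in (0 : ℝ)..T, φ x)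
      =O[atTop] fun T => T ^ p := by
    refine IsBigO.of_bound (M * ((p + 1)⁻¹ + (p + 2))) ?_
    filter_upwards [eventually_gt_atTop 0] with T hT
    rw [Real.norm_of_nonneg (Real.rpow_nonneg hT.le p)]
    exact abs_integral_rpow_mul_comp_sub_sub_le hp hT (hφ T) fun x hx => hM x hx.1
  have ho : (fun T : ℝ => T ^ p * 1) =o[atTop] fun T => T ^ p * ∫ x in (0 : ℝ)..T, φ x :=
    (isBigO_refl _ _).mul_isLittleO <|
      isLittleO_const_left.2 (Or.inr (tendsto_norm_atTop_atTop.comp hlim))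
  exact hO.trans_isLittleO (by simpa only [mul_one] using ho)

/-- The square of `∫ u in t..t + 1, (u - s) ^ (-1 / 2)` as a function of `x = t + 1 - s`, the
integrand being cut off at `u = s`. The cut-off comes for free: `√(x - 1) = 0` when `x ≤ 1`. -/
noncomputable def sqrtIncrementSq (x : ℝ) : ℝ :=
  (2 * (√x - √(x - 1))) ^ 2

theorem continuous_sqrtIncrementSq : Continuous sqrtIncrementSq := by
  unfold sqrtIncrementSq
  fun_prop

theorem sqrtIncrementSq_nonneg (x : ℝ) : 0 ≤ sqrtIncrementSq x :=
  sq_nonneg _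

theorem sqrt_mul_sqrt_sub_sqrt_le_one {x : ℝ} (hx : 0 ≤ x) : √x * (√x - √(x - 1)) ≤ 1 := by
  have hle : x - 1 ≤ √x * √(x - 1) := by
    rcases le_total x 1 with hx1 | hx1
    · exact (sub_nonpos.2 hx1).trans (by positivity)
    · calc x - 1 = √(x - 1) * √(x - 1) := (Real.mul_self_sqrt (by linarith)).symm
        _ ≤ √x * √(x - 1) := by gcongr; linarith
  rw [mul_sub, Real.mul_self_sqrt hx]
  linarith

theorem mul_sqrtIncrementSq_le {x : ℝ} (hx : 0 ≤ x) : x * sqrtIncrementSq x ≤ 4 := by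
  have hmono : √(x - 1) ≤ √x := Real.sqrt_le_sqrt (by linarith)
  calc x * sqrtIncrementSq x = 4 * (√x * (√x - √(x - 1))) ^ 2 := by
        rw [sqrtIncrementSq, mul_pow, mul_pow, Real.sq_sqrt hx]; ring
    _ ≤ 4 * 1 := by
        gcongr
        exact pow_le_one₀ (mul_nonneg (Real.sqrt_nonneg x) (sub_nonneg.2 hmono))
          (sqrt_mul_sqrt_sub_sqrt_le_one hx)
    _ = 4 := mul_one 4

theorem sqrt_sub_sqrt_sub_one {x : ℝ} (hx : 1 ≤ x) : √x - √(x - 1) = (√x + √(x - 1))⁻¹ := by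
  refine eq_inv_of_mul_eq_one_left ?_
  rw [mul_comm, ← sq_sub_sq, Real.sq_sqrt (by linarith), Real.sq_sqrt (by linarith)]
  ring

theorem inv_le_sqrtIncrementSq {x : ℝ} (hx : 1 ≤ x) : x⁻¹ ≤ sqrtIncrementSq x := by
  have : 0 < √x := Real.sqrt_pos.2 (by linarith)
  calc x⁻¹ = (2 * (√x + √x)⁻¹) ^ 2 := by
        rw [← two_mul, mul_inv, mul_inv_cancel_left₀ two_ne_zero, inv_pow,
          Real.sq_sqrt (by linarith)]
    _ ≤ (2 * (√x + √(x - 1))⁻¹) ^ 2 := by gcongr; linarith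
    _ = sqrtIncrementSq x := by rw [sqrtIncrementSq, sqrt_sub_sqrt_sub_one hx]

theorem sqrtIncrementSq_le_inv_sub_one {x : ℝ} (hx : 1 < x) : sqrtIncrementSq x ≤ (x - 1)⁻¹ := by
  have : 0 < √(x - 1) := Real.sqrt_pos.2 (by linarith)
  calc sqrtIncrementSq x = (2 * (√x + √(x - 1))⁻¹) ^ 2 := by
        rw [sqrtIncrementSq, sqrt_sub_sqrt_sub_one hx.le]
    _ ≤ (2 * (√(x - 1) + √(x - 1))⁻¹) ^ 2 := by gcongr; linarith
    _ = (x - 1)⁻¹ := by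
        rw [← two_mul, mul_inv, mul_inv_cancel_left₀ two_ne_zero, inv_pow,
          Real.sq_sqrt (by linarith)]

theorem log_le_integral_sqrtIncrementSq {T : ℝ} (hT : 1 ≤ T) :
    Real.log T ≤ ∫ x in (0 : ℝ)..T, sqrtIncrementSq x := by
  have hpos : ∀ x ∈ Icc 1 T, 0 < x := fun x hx => zero_lt_one.trans_le hx.1
  calc Real.log T = ∫ x in (1 : ℝ)..T, x⁻¹ := by
        rw [integral_inv_of_pos one_pos (one_pos.trans_le hT), div_one]
    _ ≤ ∫ x in (1 : ℝ)..T, sqrtIncrementSq x := by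
        refine intervalIntegral.integral_mono_on hT (ContinuousOn.intervalIntegrable ?_)
          (continuous_sqrtIncrementSq.intervalIntegrable _ _)
          fun x hx => inv_le_sqrtIncrementSq hx.1
        rw [uIcc_of_le hT]
        exact continuousOn_id.inv₀ fun x hx => (hpos x hx).ne'
    _ ≤ ∫ x in (0 : ℝ)..T, sqrtIncrementSq x :=
        intervalIntegral.integral_mono_interval zero_le_one hT le_rfl
          (ae_of_all _ sqrtIncrementSq_nonneg) (continuous_sqrtIncrementSq.intervalIntegrable _ _)

theorem integral_sqrtIncrementSq_le_add_log {T : ℝ} (hT : 2 ≤ T) :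
    ∫ x in (0 : ℝ)..T, sqrtIncrementSq x ≤
      (∫ x in (0 : ℝ)..2, sqrtIncrementSq x) + Real.log T := by
  have hint : ∀ a b, IntervalIntegrable sqrtIncrementSq volume a b :=
    continuous_sqrtIncrementSq.intervalIntegrable
  rw [← intervalIntegral.integral_add_adjacent_intervals (hint 0 2) (hint 2 T)]
  gcongr
  calc ∫ x in (2 : ℝ)..T, sqrtIncrementSq x ≤ ∫ x in (2 : ℝ)..T, (x - 1)⁻¹ := by
        refine intervalIntegral.integral_mono_on hT (hint 2 T) (ContinuousOn.intervalIntegrable ?_)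
          fun x hx => sqrtIncrementSq_le_inv_sub_one (by linarith [hx.1])
        rw [uIcc_of_le hT]
        exact (continuousOn_id.sub continuousOn_const).inv₀ fun x hx =>
          sub_ne_zero.2 (one_lt_two.trans_le hx.1).ne'
    _ = Real.log (T - 1) := by
        rw [intervalIntegral.integral_comp_sub_right (fun x => x⁻¹) 1,
          integral_inv_of_pos (by norm_num) (by linarith)]
        norm_num
    _ ≤ Real.log T := Real.log_le_log (by linarith) (by linarith)

theorem isEquivalent_integral_sqrtIncrementSq :
    (fun T => ∫ x in (0 : ℝ)..T, sqrtIncrementSq x) ~[atTop] Real.log := by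
  refine isEquivalent_of_eventually_mem_uIcc IsEquivalent.refl
    (IsEquivalent.refl.const_add_of_norm_tendsto_atTop
      (tendsto_norm_atTop_atTop.comp Real.tendsto_log_atTop)
      (c := ∫ x in (0 : ℝ)..2, sqrtIncrementSq x)) ?_
  filter_upwards [eventually_ge_atTop 2] with T hT
  exact Icc_subset_uIcc ⟨log_le_integral_sqrtIncrementSq (one_le_two.trans hT),
    integral_sqrtIncrementSq_le_add_log hT⟩

theorem isEquivalent_integral_rpow_mul_sqrtIncrementSq {p : ℝ} (hp : -1 < p) :
    (fun t => ∫ s in (0 : ℝ)..t + 1, s ^ p * sqrtIncrementSq (t + 1 - s)) ~[atTop]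
      fun t => t ^ p * Real.log t := by
  have hsum : (fun T => ∫ s in (0 : ℝ)..T, s ^ p * sqrtIncrementSq (T - s)) ~[atTop]
      fun T => T ^ p * Real.log T :=
    (isEquivalent_integral_rpow_mul_comp_sub (M := 4) hp
      (fun T => continuous_sqrtIncrementSq.intervalIntegrable 0 T)
      (fun x hx => by
        rw [abs_of_nonneg (sqrtIncrementSq_nonneg x)]; exact mul_sqrtIncrementSq_le hx)
      (isEquivalent_integral_sqrtIncrementSq.symm.tendsto_atTop Real.tendsto_log_atTop)).trans
      (IsEquivalent.refl.mul isEquivalent_integral_sqrtIncrementSq)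
  exact (hsum.comp_tendsto (tendsto_atTop_add_const_right _ 1 tendsto_id)).trans
    ((isEquivalent_add_const_rpow 1 p).mul ((isEquivalent_add_const 1).log tendsto_id))

theorem integral_sub_rpow_neg_half (s a b : ℝ) :
    ∫ u in a..b, (u - s) ^ (-(1 / 2) : ℝ) = 2 * (√(b - s) - √(a - s)) := by
  rw [intervalIntegral.integral_comp_sub_right (fun u => u ^ (-(1 / 2) : ℝ)) s,
    integral_rpow (Or.inl (by norm_num)), Real.sqrt_eq_rpow, Real.sqrt_eq_rpow]
  norm_num
  ring

theorem sqrt_max_sub_self (s t : ℝ) : √(max s t - s) = √(t - s) := by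
  rcases le_total s t with hst | hts
  · rw [max_eq_right hst]
  · rw [max_eq_left hts, sub_self, Real.sqrt_zero, Real.sqrt_eq_zero_of_nonpos (sub_nonpos.2 hts)]

theorem volterraKernel_sq_mem_Icc {β t s : ℝ} (ht : 0 < t) (hs : s ≤ t + 1) :
    volterraKernel β (-(1 / 2)) (max s t) (t + 1) s ^ 2 ∈
      Icc (min (t ^ β) ((t + 1) ^ β) ^ 2 * sqrtIncrementSq (t + 1 - s))
        (max (t ^ β) ((t + 1) ^ β) ^ 2 * sqrtIncrementSq (t + 1 - s)) := by
  have hker := volterraKernel_mem_Icc_mul_integral (γ := -(1 / 2)) (by norm_num) (le_max_left s t)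
    (max_le hs (by linarith)) fun u hu =>
      rpow_mem_uIcc ht ⟨(le_max_right s t).trans hu.1, hu.2⟩ β
  have hincr : 0 ≤ 2 * (√(t + 1 - s) - √(t - s)) :=
    mul_nonneg zero_le_two (sub_nonneg.2 (Real.sqrt_le_sqrt (by linarith)))
  have hmin : 0 ≤ min (t ^ β) ((t + 1) ^ β) := by positivity
  rw [integral_sub_rpow_neg_half, sqrt_max_sub_self] at hker
  rw [sqrtIncrementSq, show t + 1 - s - 1 = t - s by ring, ← mul_pow, ← mul_pow]
  exact ⟨pow_le_pow_left₀ (mul_nonneg hmin hincr) hker.1 2,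
    pow_le_pow_left₀ ((mul_nonneg hmin hincr).trans hker.1) hker.2 2⟩

theorem integral_rpow_mul_volterraKernel_sq_mem_Icc {p β t : ℝ} (hp : -1 < p) (ht : 0 < t) :
    ∫ s in (0 : ℝ)..t + 1, s ^ p * volterraKernel β (-(1 / 2)) (max s t) (t + 1) s ^ 2 ∈
      Icc (min (t ^ β) ((t + 1) ^ β) ^ 2 *
          ∫ s in (0 : ℝ)..t + 1, s ^ p * sqrtIncrementSq (t + 1 - s))
        (max (t ^ β) ((t + 1) ^ β) ^ 2 *
          ∫ s in (0 : ℝ)..t + 1, s ^ p * sqrtIncrementSq (t + 1 - s)) := by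
  have hmeas := measurable_volterraKernel β (-(1 / 2))
    (measurable_id.max (measurable_const (a := t))) (measurable_const (a := t + 1))
  have hcont : Continuous fun s => sqrtIncrementSq (t + 1 - s) :=
    continuous_sqrtIncrementSq.comp (by fun_prop)
  refine integral_mem_Icc_mul_integral (by linarith)
    ((by fun_prop : Measurable fun s : ℝ => s ^ p).mul (hmeas.pow_const 2))
    ((intervalIntegral.intervalIntegrable_rpow' hp).mul_continuousOn hcont.continuousOn)
    fun s hs => ?_
  obtain ⟨hl, hm⟩ := volterraKernel_sq_mem_Icc (β := β) ht hs.2.le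
  have hsp : 0 ≤ s ^ p := Real.rpow_nonneg hs.1.le p
  simp only [mul_left_comm _ (s ^ p)]
  exact ⟨mul_le_mul_of_nonneg_left hl hsp, mul_le_mul_of_nonneg_left hm hsp⟩

theorem isEquivalent_integral_rpow_mul_volterraKernel_sq {p : ℝ} (hp : -1 < p) (β : ℝ) :
    (fun t => ∫ s in (0 : ℝ)..t + 1,
        s ^ p * volterraKernel β (-(1 / 2)) (max s t) (t + 1) s ^ 2) ~[atTop]
      fun t => (t ^ β) ^ 2 * (t ^ p * Real.log t) := by
  have htβ : (fun t : ℝ => t ^ β) ~[atTop] fun t => t ^ β := IsEquivalent.refl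
  have hsuccβ := isEquivalent_add_const_rpow 1 β
  have hW := isEquivalent_integral_rpow_mul_sqrtIncrementSq hp
  refine isEquivalent_of_eventually_mem_uIcc (((isEquivalent_min htβ hsuccβ).pow 2).mul hW)
    (((isEquivalent_max htβ hsuccβ).pow 2).mul hW) ?_
  filter_upwards [eventually_gt_atTop 0] with t ht
  exact Icc_subset_uIcc (integral_rpow_mul_volterraKernel_sq_mem_Icc hp ht)

theorem isEquivalent_sqrt_integral_rpow_mul_volterraKernel_sq {α : ℝ} (hα : -(1 / 2) < α) (β : ℝ) :
    (fun t => √(∫ s in (0 : ℝ)..t + 1,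
        s ^ (2 * α) * volterraKernel β (-(1 / 2)) (max s t) (t + 1) s ^ 2)) ~[atTop]
      fun t => t ^ (α + β) * √(Real.log t) := by
  have hV := isEquivalent_integral_rpow_mul_volterraKernel_sq (p := 2 * α) (by linarith) β
  refine (isEquivalent_sqrt ?_ hV).congr_right ?_
  · filter_upwards [eventually_ge_atTop 1] with t ht
    exact mul_nonneg (sq_nonneg _)
      (mul_nonneg (Real.rpow_nonneg (by linarith) _) (Real.log_nonneg ht))
  · filter_upwards [eventually_gt_atTop 0] with t ht
    have hsq : (t ^ β) ^ 2 * (t ^ (2 * α) * Real.log t) = (t ^ (α + β)) ^ 2 * Real.log t := by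
      rw [mul_comm 2 α, Real.rpow_mul ht.le, Real.rpow_two, Real.rpow_add ht]; ring
    rw [hsq, Real.sqrt_mul (sq_nonneg _), Real.sqrt_sq (Real.rpow_nonneg ht.le _)]

theorem rpow_mul_sqrt_log_mul_div_eq (α β a b : ℝ) {t : ℝ} (ht : 1 < t) :
    t ^ (α + 1 / 2) * √(Real.log t) *
      (t ^ β * t ^ (-(1 / 2) : ℝ) * a / (b * (t ^ (α + β) * √(Real.log t)))) = a / b := by
  have ht0 : 0 < t := one_pos.trans ht
  have hlog : √(Real.log t) ≠ 0 := (Real.sqrt_pos.2 (Real.log_pos ht)).ne'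
  have hpow : t ^ (α + 1 / 2) * (t ^ β * t ^ (-(1 / 2) : ℝ)) = t ^ (α + β) := by
    rw [← Real.rpow_add ht0, ← Real.rpow_add ht0]
    ring_nf
  calc _ = t ^ (α + 1 / 2) * (t ^ β * t ^ (-(1 / 2) : ℝ)) * √(Real.log t) * a /
        (t ^ (α + β) * √(Real.log t) * b) := by ring
    _ = a / b := by
        rw [hpow, mul_div_mul_left _ _ (mul_ne_zero (Real.rpow_pos_of_pos ht0 _).ne' hlog)]

/-- Theorem 3.5, case `γ = -1/2`: asymptotics of the correlation
`corr(X₁, X_{t+1} - X_t)` of the Gaussian Volterra process. -/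
theorem stmt_8 (α β γ : ℝ) (hα : -(1/2 : ℝ) < α)
    (hαβγ : -(3/2 : ℝ) < α + β + γ) (hγ' : γ = -(1/2 : ℝ))
    (F V r : ℝ → ℝ) (C : ℝ)
    (hF : ∀ t : ℝ, F t = ∫ s in (0:ℝ)..1, s ^ (2*α) *
      (∫ u in s..1, u ^ β * (u - s) ^ γ) *
      (∫ v in t..(t+1), v ^ β * (v - s) ^ γ))
    (hV : ∀ t : ℝ, V t = ∫ s in (0:ℝ)..(t+1), s ^ (2*α) *
      (∫ u in (max s t)..(t+1), u ^ β * (u - s) ^ γ) ^ 2)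
    (hC : C = ∫ s in (0:ℝ)..1, s ^ (2*α) *
      (∫ u in s..1, u ^ β * (u - s) ^ γ) ^ 2)
    (hr : ∀ t : ℝ, r t = F t / (Real.sqrt C * Real.sqrt (V t))) :
    ∃ c : ℝ, 0 < c ∧
      Tendsto (fun t : ℝ => t ^ (α + 1/2) * Real.sqrt (Real.log t) * r t)
        atTop (nhds c) := by
  subst hγ'
  have hγ : (-1 : ℝ) < -(1 / 2) := by norm_num
  set A := ∫ s in (0 : ℝ)..1, s ^ (2 * α) * volterraKernel β (-(1 / 2)) s 1 s
  have hC_pos : 0 < C := hC ▸ integral_rpow_mul_volterraKernel_pow_pos le_rfl hα hγ hαβγ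
  have hA_pos : 0 < A := by
    simpa only [pow_one] using integral_rpow_mul_volterraKernel_pow_pos one_le_two hα hγ hαβγ
  have hF_equiv : F ~[atTop] fun t => t ^ β * t ^ (-(1 / 2) : ℝ) * A :=
    funext hF ▸ isEquivalent_integral_volterraKernel_mul_volterraKernel hα hγ hαβγ
  have hV_equiv : (fun t => √(V t)) ~[atTop] fun t => t ^ (α + β) * √(Real.log t) :=
    funext hV ▸ isEquivalent_sqrt_integral_rpow_mul_volterraKernel_sq hα β
  have hr_equiv : r ~[atTop] fun t => t ^ β * t ^ (-(1 / 2) : ℝ) * A /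
      (√C * (t ^ (α + β) * √(Real.log t))) :=
    funext hr ▸ hF_equiv.div (IsEquivalent.refl.mul hV_equiv)
  refine ⟨A / √C, by positivity, IsEquivalent.tendsto_const <|
    (IsEquivalent.refl.mul hr_equiv).congr_right ?_⟩
  filter_upwards [eventually_gt_atTop 1] with t ht
  exact rpow_mul_sqrt_log_mul_div_eq α β A _ ht
end

section
/- Let α, β, γ be real numbers with α > -1/2, α + β + γ > -3/2, γ ∈ (−1, −1/2), and let θ > 0. Define h(T) = ∫₀ᵀ s^{2α}(T−s)^γ (∫ₛᵀ e^{θt} t^β (t−s)^γ dt) ds for T > 0. Then lim_{T→+∞} h(T) / (T^{2α+β} e^{θT}) = σ² / θ^{2γ+2}, where σ² = Γ(γ+1)Γ(−2γ−1)Γ(2γ+2) / Γ(−γ). -/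
open MeasureTheory Filter intervalIntegral

/-!
The integrand `s ^ a (T - s) ^ b exp (θ t) t ^ β (t - s) ^ c`, with `a = 2 α` and `b = c = γ` in the
end, lives on the triangle `0 < s < t < T`, which scales to `0 < s < t < 1`. Integrating over `s`
first, a Möbius substitution turns the slice at height `t` into
`t ^ (a + c + 1) (1 - t) ^ (b + c + 1)` times an Euler integral which, because `b + c < -1`, stays
continuous up to `t = 1`, where it is the Beta value `B(c + 1, -b - c - 1)`. With `x = 1 - t` there
remains a Laplace integral of `x ^ (b + c + 1) exp (-θ T x)` against a function continuous at
`x = 0`. Watson's lemma evaluates its limit; it holds because the rescaled Gamma densities form an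
approximate identity at `0`.
-/

open Set Topology ProbabilityTheory Bornology

lemma integral_gammaPDFReal {s r : ℝ} (hs : 0 < s) (hr : 0 < r) :
    ∫ x, gammaPDFReal s r x = 1 := by
  rw [integral_eq_lintegral_of_nonneg_ae (ae_of_all _ (gammaPDFReal_nonneg hs hr))
    (measurable_gammaPDFReal s r).aestronglyMeasurable]
  exact (congrArg ENNReal.toReal (lintegral_gammaPDF_eq_one hs hr)).trans ENNReal.toReal_one

lemma tendsto_norm_mul_gammaPDFReal_cobounded (s : ℝ) {r : ℝ} (hr : 0 < r) :
    Tendsto (fun x => ‖x‖ * gammaPDFReal s r x) (cobounded ℝ) (𝓝 0) := by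
  have hdecay := ((tendsto_rpow_mul_exp_neg_mul_atTop_nhds_zero s r hr).comp
    (tendsto_norm_cobounded_atTop (E := ℝ))).const_mul |r ^ s / Real.Gamma s|
  rw [mul_zero] at hdecay
  refine squeeze_zero_norm' ?_ hdecay
  filter_upwards [eventually_ne_cobounded 0] with x hx
  rw [gammaPDFReal, Function.comp_apply]
  split_ifs with hx0
  · have hpos : 0 < x := hx0.lt_of_ne' hx
    simp only [norm_mul, Real.norm_eq_abs, abs_of_pos hpos, Real.abs_exp,
      abs_of_pos (Real.rpow_pos_of_pos hpos _), neg_mul]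
    rw [Real.rpow_sub_one hpos.ne']
    apply le_of_eq
    field_simp
  · rw [mul_zero, norm_zero]
    positivity

section Watson

variable {E : Type*} [NormedAddCommGroup E]

open scoped Classical in
lemma exists_integrable_continuousAt_eqOn_Ioi {g : ℝ → E} {x₀ : ℝ} {L : E}
    (hg : IntegrableOn g (Ioi x₀)) (hL : Tendsto g (𝓝[>] x₀) (𝓝 L)) :
    ∃ f : ℝ → E, Integrable f ∧ ContinuousAt f x₀ ∧ f x₀ = L ∧ EqOn f g (Ioi x₀) := by
  have hx₀ : x₀ ∈ Icc (x₀ - 1) x₀ := by simp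
  have hval : (Ioi x₀).piecewise g ((Icc (x₀ - 1) x₀).indicator fun _ => L) x₀ = L := by
    rw [piecewise_eq_of_notMem _ _ _ self_notMem_Ioi, indicator_of_mem hx₀]
  refine ⟨(Ioi x₀).piecewise g ((Icc (x₀ - 1) x₀).indicator fun _ => L), ?_, ?_, hval,
    piecewise_eqOn _ _ _⟩
  · exact Integrable.piecewise measurableSet_Ioi hg
      ((integrableOn_const (by simp)).integrable_indicator measurableSet_Icc).integrableOn
  · rw [ContinuousAt, hval]
    refine Tendsto.piecewise hL (tendsto_const_nhds.congr' ?_)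
    rw [compl_Ioi]
    filter_upwards [Icc_mem_nhdsLE (sub_one_lt x₀)] with x hx using
      (indicator_of_mem hx fun _ => L).symm

theorem tendsto_integral_rpow_mul_exp_neg_mul_smul [NormedSpace ℝ E] [CompleteSpace E] {s : ℝ}
    (hs : 0 < s) {g : ℝ → E} {L : E}
    (hg : IntegrableOn g (Ioi 0)) (hL : Tendsto g (𝓝[>] 0) (𝓝 L)) :
    Tendsto (fun c : ℝ => c ^ s • ∫ x in Ioi 0, (x ^ (s - 1) * Real.exp (-(c * x))) • g x) atTop
      (𝓝 (Real.Gamma s • L)) := by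
  obtain ⟨f, hf, hf0, hfL, hfg⟩ := exists_integrable_continuousAt_eqOn_Ioi hg hL
  have hpeak := tendsto_integral_comp_smul_smul_of_integrable (μ := volume)
    (gammaPDFReal_nonneg hs one_pos) (integral_gammaPDFReal hs one_pos)
    (by simpa using tendsto_norm_mul_gammaPDFReal_cobounded s one_pos) hf hf0
  rw [hfL] at hpeak
  refine (hpeak.const_smul (Real.Gamma s)).congr' ?_
  filter_upwards [eventually_gt_atTop 0] with c hc
  rw [← MeasureTheory.integral_smul, ← MeasureTheory.integral_smul,
    ← MeasureTheory.integral_indicator measurableSet_Ioi]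
  refine integral_congr_ae ?_
  filter_upwards [volume.ae_ne 0] with x hx0
  rcases hx0.lt_or_gt with hx | hx
  · have hcx : ¬ 0 ≤ c • x := (smul_neg_of_pos_of_neg hc hx).not_ge
    simp only [gammaPDFReal, if_neg hcx, indicator_of_notMem (notMem_Ioi.2 hx.le), mul_zero,
      zero_smul, smul_zero]
  · have hcx : 0 ≤ c • x := (smul_pos hc hx).le
    have hΓ := (Real.Gamma_pos_of_pos hs).ne'
    simp only [gammaPDFReal, if_pos hcx, indicator_of_mem (mem_Ioi.2 hx), hfg hx, smul_smul]
    congr 1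
    rw [smul_eq_mul, Real.mul_rpow hc.le hx.le, Real.rpow_sub_one hc.ne' s, Real.one_rpow,
      Module.finrank_self, pow_one]
    field_simp

theorem tendsto_integral_Ioo_rpow_mul_exp_neg_mul_smul [NormedSpace ℝ E] [CompleteSpace E]
    {s b : ℝ} (hs : 0 < s) (hb : 0 < b) {g : ℝ → E} {L : E}
    (hg : IntegrableOn g (Ioo 0 b)) (hL : Tendsto g (𝓝[>] 0) (𝓝 L)) :
    Tendsto (fun c : ℝ => c ^ s • ∫ x in Ioo 0 b, (x ^ (s - 1) * Real.exp (-(c * x))) • g x) atTop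
      (𝓝 (Real.Gamma s • L)) := by
  have hg' : IntegrableOn ((Ioo 0 b).indicator g) (Ioi 0) :=
    (hg.integrable_indicator measurableSet_Ioo).integrableOn
  have hL' : Tendsto ((Ioo 0 b).indicator g) (𝓝[>] 0) (𝓝 L) := by
    refine hL.congr' ?_
    filter_upwards [Ioo_mem_nhdsGT hb] with x hx using (indicator_of_mem hx g).symm
  refine (tendsto_integral_rpow_mul_exp_neg_mul_smul hs hg' hL').congr fun c => ?_
  simp only [← indicator_smul]
  rw [setIntegral_indicator measurableSet_Ioo, inter_eq_right.2 Ioo_subset_Ioi_self]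

end Watson

lemma integral_Ioo_rpow_mul_one_sub_rpow {p q : ℝ} (hp : -1 < p) (hq : -1 < q) :
    ∫ x in Ioo (0 : ℝ) 1, x ^ p * (1 - x) ^ q = beta (p + 1) (q + 1) := by
  have hcomplex : Complex.betaIntegral ((p + 1 : ℝ) : ℂ) ((q + 1 : ℝ) : ℂ)
      = ((∫ x in Ioo (0 : ℝ) 1, x ^ p * (1 - x) ^ q : ℝ) : ℂ) := by
    rw [Complex.betaIntegral, intervalIntegral.integral_of_le zero_le_one,
      integral_Ioc_eq_integral_Ioo, ← integral_complex_ofReal]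
    refine setIntegral_congr_fun measurableSet_Ioo fun x hx => ?_
    have hx' : 0 ≤ 1 - x := sub_nonneg.2 hx.2.le
    simp [Complex.ofReal_cpow hx.1.le, Complex.ofReal_cpow hx']
  rw [beta_eq_betaIntegralReal _ _ (by linarith) (by linarith), hcomplex, Complex.ofReal_re]

lemma integrableOn_Ioo_rpow_mul_one_sub_rpow {p q : ℝ} (hp : -1 < p) (hq : -1 < q) :
    IntegrableOn (fun x : ℝ => x ^ p * (1 - x) ^ q) (Ioo 0 1) := by
  refine .of_integral_ne_zero ?_
  rw [integral_Ioo_rpow_mul_one_sub_rpow hp hq]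
  exact (beta_pos (by linarith) (by linarith)).ne'

/-- Euler's integral `B(p + 1, q + 1) ₂F₁(e, p + 1; p + q + 2; z)` for the Gauss hypergeometric
function, parametrised by the exponents of its integrand. The integrals of
`s ^ a (1 - s) ^ b (z - s) ^ c` over `(0, z)` are multiples of it. -/
noncomputable def eulerIntegral (p q e z : ℝ) : ℝ :=
  ∫ x in Ioo (0 : ℝ) 1, x ^ p * (1 - x) ^ q * (1 - z * x) ^ (-e)

section eulerIntegral

variable {p q e z : ℝ}

lemma eulerIntegral_one (hp : -1 < p) (hqe : -1 < q - e) :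
    eulerIntegral p q e 1 = beta (p + 1) (q - e + 1) := by
  rw [← integral_Ioo_rpow_mul_one_sub_rpow hp hqe]
  refine setIntegral_congr_fun measurableSet_Ioo fun x hx => ?_
  have hx' : 0 < 1 - x := sub_pos.2 hx.2
  simp only [one_mul]
  rw [sub_eq_add_neg q e, Real.rpow_add hx']
  ring

lemma rpow_le_rpow_add_one {x y : ℝ} (r : ℝ) (hx : 0 < x) (hxy : x ≤ y) (hy : y ≤ 1) :
    y ^ r ≤ x ^ r + 1 := by
  have hx0 : 0 ≤ x ^ r := Real.rpow_nonneg hx.le r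
  rcases le_total 0 r with hr | hr
  · linarith [Real.rpow_le_one (hx.le.trans hxy) hy hr]
  · linarith [Real.rpow_le_rpow_of_nonpos hx hxy hr]

lemma one_sub_mul_mem_Icc {x : ℝ} (hz : z ∈ Icc (0 : ℝ) 1) (hx : 0 ≤ x) :
    1 - z * x ∈ Icc (1 - x) 1 :=
  ⟨by nlinarith [hz.2], by nlinarith [hz.1]⟩

lemma norm_eulerIntegrand_le (hz : z ∈ Icc (0 : ℝ) 1) {x : ℝ} (hx : x ∈ Ioo (0 : ℝ) 1) :
    ‖x ^ p * (1 - x) ^ q * (1 - z * x) ^ (-e)‖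
      ≤ x ^ p * (1 - x) ^ (q - e) + x ^ p * (1 - x) ^ q := by
  have hx0 := hx.1
  have hx1 : 0 < 1 - x := sub_pos.2 hx.2
  obtain ⟨hlow, hupp⟩ := one_sub_mul_mem_Icc hz hx0.le
  have hpos : 0 < 1 - z * x := hx1.trans_le hlow
  rw [Real.norm_of_nonneg (by positivity)]
  calc x ^ p * (1 - x) ^ q * (1 - z * x) ^ (-e)
      ≤ x ^ p * (1 - x) ^ q * ((1 - x) ^ (-e) + 1) := by
        gcongr
        exact rpow_le_rpow_add_one _ hx1 hlow hupp
    _ = x ^ p * (1 - x) ^ (q - e) + x ^ p * (1 - x) ^ q := by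
        rw [sub_eq_add_neg q e, Real.rpow_add hx1]
        ring

lemma integrableOn_eulerIntegrand_bound (hp : -1 < p) (hq : -1 < q) (hqe : -1 < q - e) :
    IntegrableOn (fun x : ℝ => x ^ p * (1 - x) ^ (q - e) + x ^ p * (1 - x) ^ q) (Ioo 0 1) :=
  (integrableOn_Ioo_rpow_mul_one_sub_rpow hp hqe).add
    (integrableOn_Ioo_rpow_mul_one_sub_rpow hp hq)

lemma integrableOn_eulerIntegrand (hp : -1 < p) (hq : -1 < q) (hqe : -1 < q - e)
    (hz : z ∈ Icc (0 : ℝ) 1) :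
    IntegrableOn (fun x : ℝ => x ^ p * (1 - x) ^ q * (1 - z * x) ^ (-e)) (Ioo 0 1) := by
  refine (integrableOn_eulerIntegrand_bound hp hq hqe).mono' (by fun_prop) ?_
  exact ae_restrict_of_forall_mem measurableSet_Ioo fun x hx => norm_eulerIntegrand_le hz hx

lemma continuousOn_eulerIntegral (hp : -1 < p) (hq : -1 < q) (hqe : -1 < q - e) :
    ContinuousOn (eulerIntegral p q e) (Icc 0 1) := by
  refine continuousOn_of_dominated (fun z _ => by fun_prop)
    (fun z hz => ae_restrict_of_forall_mem measurableSet_Ioo fun x hx =>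
      norm_eulerIntegrand_le hz hx)
    (integrableOn_eulerIntegrand_bound hp hq hqe)
    (ae_restrict_of_forall_mem measurableSet_Ioo fun x hx => ?_)
  refine continuousOn_const.mul (ContinuousOn.rpow_const (by fun_prop) fun z hz => Or.inl ?_)
  exact ((sub_pos.2 hx.2).trans_le (one_sub_mul_mem_Icc hz hx.1.le).1).ne'

end eulerIntegral

/-- The Möbius substitution `s = z (1 - x) / (1 - z x)`, an orientation-reversing bijection of
`(0, 1)` onto `(0, z)` when `0 < z < 1`; it turns integrals of `s ^ a (1 - s) ^ b (z - s) ^ c` into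
Euler integrals. -/
noncomputable def eulerSubst (z x : ℝ) : ℝ :=
  z * (1 - x) / (1 - z * x)

section eulerSubst

variable {z x : ℝ}

lemma one_sub_mul_pos (hz : z < 1) (hx : x ∈ Ioo (0 : ℝ) 1) : 0 < 1 - z * x := by
  nlinarith [hx.1, hx.2]

lemma one_sub_eulerSubst (h : 1 - z * x ≠ 0) :
    1 - eulerSubst z x = (1 - z) / (1 - z * x) := by
  rw [eulerSubst]
  field_simp
  ring

lemma sub_eulerSubst (h : 1 - z * x ≠ 0) :
    z - eulerSubst z x = z * (1 - z) * x / (1 - z * x) := by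
  rw [eulerSubst]
  field_simp
  ring

lemma hasDerivAt_eulerSubst (h : 1 - z * x ≠ 0) :
    HasDerivAt (eulerSubst z) (-(z * (1 - z)) / (1 - z * x) ^ 2) x := by
  have hnum : HasDerivAt (fun x => z * (1 - x)) (-z) x := by
    simpa using ((hasDerivAt_id x).const_sub 1).const_mul z
  have hden : HasDerivAt (fun x => 1 - z * x) (-z) x := by
    simpa using ((hasDerivAt_id x).const_mul z).const_sub 1
  refine (hnum.div hden h).congr_deriv ?_
  ring

lemma bijOn_eulerSubst (hz : z ∈ Ioo (0 : ℝ) 1) : BijOn (eulerSubst z) (Ioo 0 1) (Ioo 0 z) := by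
  obtain ⟨hz0, hz1⟩ := hz
  have : 0 < 1 - z := sub_pos.2 hz1
  refine InvOn.bijOn (f' := fun s => (z - s) / (z * (1 - s))) ⟨?_, ?_⟩ ?_ ?_
  · intro x hx
    have hden := one_sub_mul_pos hz1 hx
    simp only [one_sub_eulerSubst hden.ne', sub_eulerSubst hden.ne']
    field_simp
  · rintro s ⟨hs0, hsz⟩
    have hs1 : 0 < 1 - s := by linarith
    have hnum : 1 - (z - s) / (z * (1 - s)) = s * (1 - z) / (z * (1 - s)) := by
      field_simp
      ring
    have hden : 1 - z * ((z - s) / (z * (1 - s))) = (1 - z) / (1 - s) := by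
      field_simp
      ring
    simp only [eulerSubst, hnum, hden]
    field_simp
  · intro x hx
    have hx0 := hx.1
    have hx' : 0 < 1 - x := sub_pos.2 hx.2
    have hden := one_sub_mul_pos hz1 hx
    refine ⟨by rw [eulerSubst]; positivity, sub_pos.1 ?_⟩
    rw [sub_eulerSubst hden.ne']
    positivity
  · rintro s ⟨hs0, hsz⟩
    have : 0 < z - s := sub_pos.2 hsz
    have hs1 : 0 < 1 - s := by linarith
    exact ⟨by positivity, (div_lt_one (by positivity)).2 (by nlinarith)⟩

lemma abs_deriv_smul_comp_eulerSubst (a b c : ℝ) (hz : z ∈ Ioo (0 : ℝ) 1)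
    (hx : x ∈ Ioo (0 : ℝ) 1) :
    |-(z * (1 - z)) / (1 - z * x) ^ 2| •
        (eulerSubst z x ^ a * (1 - eulerSubst z x) ^ b * (z - eulerSubst z x) ^ c)
      = z ^ (a + c + 1) * (1 - z) ^ (b + c + 1) *
        (x ^ c * (1 - x) ^ a * (1 - z * x) ^ (-(a + b + c + 2))) := by
  have hden := one_sub_mul_pos hz.2 hx
  obtain ⟨hz0, hz1⟩ := hz
  obtain ⟨hx0, hx1⟩ := hx
  have hz' : 0 < 1 - z := sub_pos.2 hz1
  have hx' : 0 < 1 - x := sub_pos.2 hx1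
  have rpow_add_add_one (y : ℝ) (hy : 0 < y) (u v : ℝ) : y ^ (u + v + 1) = y ^ u * y ^ v * y := by
    rw [Real.rpow_add hy, Real.rpow_add hy, Real.rpow_one]
  have rpow_den : (1 - z * x) ^ (a + b + c + 2)
      = (1 - z * x) ^ a * (1 - z * x) ^ b * (1 - z * x) ^ c * (1 - z * x) ^ 2 := by
    rw [Real.rpow_add hden, Real.rpow_add hden, Real.rpow_add hden, Real.rpow_ofNat]
  rw [one_sub_eulerSubst hden.ne', sub_eulerSubst hden.ne', eulerSubst, smul_eq_mul, abs_div,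
    abs_neg, abs_of_pos (mul_pos hz0 hz'), abs_of_pos (pow_pos hden 2),
    Real.div_rpow (by positivity) hden.le, Real.div_rpow hz'.le hden.le,
    Real.div_rpow (by positivity) hden.le, Real.mul_rpow hz0.le hx'.le,
    Real.mul_rpow (by positivity) hx0.le, Real.mul_rpow hz0.le hz'.le, Real.rpow_neg hden.le,
    rpow_den, rpow_add_add_one z hz0, rpow_add_add_one (1 - z) hz']
  field_simp

end eulerSubst

section slice

variable {a b c t : ℝ}

lemma integrableOn_Ioo_rpow_mul_one_sub_rpow_mul_sub_rpow (ha : -1 < a) (hc : -1 < c)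
    (hbc : b + c < -1) (ht : t ∈ Ioo (0 : ℝ) 1) :
    IntegrableOn (fun s => s ^ a * (1 - s) ^ b * (t - s) ^ c) (Ioo 0 t) := by
  have hbij := bijOn_eulerSubst ht
  rw [← hbij.image_eq, integrableOn_image_iff_integrableOn_abs_deriv_smul measurableSet_Ioo
      (fun x hx => (hasDerivAt_eulerSubst (one_sub_mul_pos ht.2 hx).ne').hasDerivWithinAt)
      hbij.injOn, integrableOn_congr_fun (fun x hx => abs_deriv_smul_comp_eulerSubst a b c ht hx)
      measurableSet_Ioo]
  exact (integrableOn_eulerIntegrand hc ha (by linarith) (Ioo_subset_Icc_self ht)).const_mul _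

lemma integral_Ioo_rpow_mul_one_sub_rpow_mul_sub_rpow (a b c : ℝ) (ht : t ∈ Ioo (0 : ℝ) 1) :
    ∫ s in Ioo 0 t, s ^ a * (1 - s) ^ b * (t - s) ^ c
      = t ^ (a + c + 1) * (1 - t) ^ (b + c + 1) * eulerIntegral c a (a + b + c + 2) t := by
  have hbij := bijOn_eulerSubst ht
  rw [← hbij.image_eq, integral_image_eq_integral_abs_deriv_smul measurableSet_Ioo
      (fun x hx => (hasDerivAt_eulerSubst (one_sub_mul_pos ht.2 hx).ne').hasDerivWithinAt)
      hbij.injOn, setIntegral_congr_fun measurableSet_Ioo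
      (fun x hx => abs_deriv_smul_comp_eulerSubst a b c ht hx), MeasureTheory.integral_const_mul,
    eulerIntegral]

end slice

section triangle

variable {E : Type*} [NormedAddCommGroup E]

lemma integral_Ioo_integral_Ioo_swap [NormedSpace ℝ E] {a b : ℝ} {F : ℝ → ℝ → E}
    (hF : StronglyMeasurable (Function.uncurry F))
    (hslice : ∀ t ∈ Ioo a b, IntegrableOn (fun s => F s t) (Ioo a t))
    (hnorm : IntegrableOn (fun t => ∫ s in Ioo a t, ‖F s t‖) (Ioo a b)) :
    ∫ s in Ioo a b, ∫ t in Ioo s b, F s t = ∫ t in Ioo a b, ∫ s in Ioo a t, F s t := by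
  let G (s t : ℝ) : E := {z : ℝ × ℝ | z.1 < z.2}.indicator (Function.uncurry F) (s, t)
  have hGs (s t : ℝ) : G s t = (Ioi s).indicator (F s) t := rfl
  have hGt (s t : ℝ) : G s t = (Iio t).indicator (fun s => F s t) s := rfl
  have hinter {t : ℝ} (ht : t ∈ Ioo a b) : Ioo a b ∩ Iio t = Ioo a t := by
    rw [Ioo_inter_Iio, min_eq_right ht.2.le]
  have hG : StronglyMeasurable (Function.uncurry G) :=
    hF.indicator (measurableSet_lt measurable_fst measurable_snd)
  have hint : Integrable (Function.uncurry G)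
      ((volume.restrict (Ioo a b)).prod (volume.restrict (Ioo a b))) := by
    rw [integrable_prod_iff' hG.aestronglyMeasurable]
    refine ⟨ae_restrict_of_forall_mem measurableSet_Ioo fun t ht => ?_,
      hnorm.congr_fun (fun t ht => ?_) measurableSet_Ioo⟩
    · simp only [Function.uncurry_apply_pair, hGt]
      rw [integrable_indicator_iff measurableSet_Iio, IntegrableOn,
        Measure.restrict_restrict measurableSet_Iio, inter_comm, hinter ht]
      exact hslice t ht
    · simp only [Function.uncurry_apply_pair, hGt, norm_indicator_eq_indicator_norm]
      rw [setIntegral_indicator measurableSet_Iio, hinter ht]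
  calc ∫ s in Ioo a b, ∫ t in Ioo s b, F s t
      = ∫ s in Ioo a b, ∫ t in Ioo a b, G s t :=
        setIntegral_congr_fun measurableSet_Ioo fun s hs => by
          simp only [hGs]
          rw [setIntegral_indicator measurableSet_Ioi, Ioo_inter_Ioi, max_eq_right hs.1.le]
    _ = ∫ t in Ioo a b, ∫ s in Ioo a b, G s t := integral_integral_swap hint
    _ = ∫ t in Ioo a b, ∫ s in Ioo a t, F s t :=
        setIntegral_congr_fun measurableSet_Ioo fun t ht => by
          simp only [hGt]
          rw [setIntegral_indicator measurableSet_Iio, hinter ht]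

end triangle

section scaling

variable {a b c : ℝ} {f : ℝ → ℝ}

lemma integrableOn_mul_eulerIntegral {p q e : ℝ} (hp : -1 < p) (hq : -1 < q) (hqe : -1 < q - e)
    (hf : IntegrableOn f (Ioo 0 1)) :
    IntegrableOn (fun z => f z * eulerIntegral p q e z) (Ioo 0 1) :=
  hf.mul_continuousOn_of_subset (continuousOn_eulerIntegral hp hq hqe) measurableSet_Ioo
    isCompact_Icc Ioo_subset_Icc_self

lemma integral_Ioo_integral_Ioo_mul_rpow (ha : -1 < a) (hc : -1 < c) (hbc : b + c < -1)
    (hf : Measurable f)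
    (hint : IntegrableOn (fun t => f t * (t ^ (a + c + 1) * (1 - t) ^ (b + c + 1))) (Ioo 0 1)) :
    ∫ s in Ioo (0 : ℝ) 1, ∫ t in Ioo s 1, f t * (s ^ a * (1 - s) ^ b * (t - s) ^ c)
      = ∫ t in Ioo (0 : ℝ) 1, f t * (t ^ (a + c + 1) * (1 - t) ^ (b + c + 1)) *
          eulerIntegral c a (a + b + c + 2) t := by
  rw [integral_Ioo_integral_Ioo_swap]
  · refine setIntegral_congr_fun measurableSet_Ioo fun t ht => ?_
    rw [MeasureTheory.integral_const_mul, integral_Ioo_rpow_mul_one_sub_rpow_mul_sub_rpow a b c ht]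
    ring
  · exact (by fun_prop : Measurable _).stronglyMeasurable
  · intro t ht
    exact (integrableOn_Ioo_rpow_mul_one_sub_rpow_mul_sub_rpow ha hc hbc ht).const_mul _
  · refine ((integrableOn_mul_eulerIntegral hc ha (e := a + b + c + 2) (by linarith)
      hint.norm)).congr_fun (fun t ht => ?_) measurableSet_Ioo
    have ht0 := ht.1
    have ht1 : 0 < 1 - t := sub_pos.2 ht.2
    have hnorm : EqOn (fun s => ‖f t * (s ^ a * (1 - s) ^ b * (t - s) ^ c)‖)
        (fun s => ‖f t‖ * (s ^ a * (1 - s) ^ b * (t - s) ^ c)) (Ioo 0 t) := fun s hs => by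
      have hs0 := hs.1
      have hst : 0 < t - s := sub_pos.2 hs.2
      have hs1 : 0 < 1 - s := by linarith
      simp only [norm_mul _ (s ^ a * _ * _), Real.norm_of_nonneg
        (show 0 ≤ s ^ a * (1 - s) ^ b * (t - s) ^ c by positivity)]
    rw [setIntegral_congr_fun measurableSet_Ioo hnorm, MeasureTheory.integral_const_mul,
      integral_Ioo_rpow_mul_one_sub_rpow_mul_sub_rpow a b c ht]
    beta_reduce
    rw [norm_mul,
      Real.norm_of_nonneg (show 0 ≤ t ^ (a + c + 1) * (1 - t) ^ (b + c + 1) by positivity),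
      mul_assoc]

lemma integral_mul_integral_eq_rpow_mul_integral_Ioo (a b c : ℝ) (f : ℝ → ℝ) {T : ℝ} (hT : 0 < T) :
    ∫ s in (0 : ℝ)..T, s ^ a * (T - s) ^ b * ∫ t in s..T, f t * (t - s) ^ c
      = T ^ (a + b + c + 2) * ∫ s in Ioo (0 : ℝ) 1, ∫ t in Ioo s 1,
          f (T * t) * (s ^ a * (1 - s) ^ b * (t - s) ^ c) := by
  have hinner (s : ℝ) : ∫ t in T * s..T, f t * (t - T * s) ^ c
      = T * ∫ t in s..1, f (T * t) * (T * t - T * s) ^ c := by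
    rw [mul_integral_comp_mul_left (f := fun t => f t * (t - T * s) ^ c), mul_one]
  have houter := mul_integral_comp_mul_left (a := 0) (b := 1)
    (f := fun s => s ^ a * (T - s) ^ b * ∫ t in s..T, f t * (t - s) ^ c) T
  rw [mul_zero, mul_one] at houter
  rw [← houter, integral_of_le zero_le_one, integral_Ioc_eq_integral_Ioo,
    ← MeasureTheory.integral_const_mul, ← MeasureTheory.integral_const_mul]
  refine setIntegral_congr_fun measurableSet_Ioo fun s hs => ?_
  rw [hinner, integral_of_le hs.2.le, integral_Ioc_eq_integral_Ioo,
    ← MeasureTheory.integral_const_mul, ← MeasureTheory.integral_const_mul,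
    ← MeasureTheory.integral_const_mul, ← MeasureTheory.integral_const_mul]
  refine setIntegral_congr_fun measurableSet_Ioo fun t ht => ?_
  have h1s : 0 ≤ 1 - s := sub_nonneg.2 hs.2.le
  have hts : 0 ≤ t - s := sub_nonneg.2 ht.1.le
  rw [show T - T * s = T * (1 - s) by ring, show T * t - T * s = T * (t - s) by ring,
    Real.mul_rpow hT.le hs.1.le, Real.mul_rpow hT.le h1s, Real.mul_rpow hT.le hts,
    Real.rpow_add hT, Real.rpow_add hT, Real.rpow_add hT, Real.rpow_ofNat]
  ring

lemma integral_Ioo_zero_one_comp_one_sub {E : Type*} [NormedAddCommGroup E] [NormedSpace ℝ E]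
    (F : ℝ → E) :
    ∫ x in Ioo (0 : ℝ) 1, F (1 - x) = ∫ x in Ioo (0 : ℝ) 1, F x := by
  simpa only [sub_zero, sub_self, integral_of_le zero_le_one, integral_Ioc_eq_integral_Ioo] using
    integral_comp_sub_left (a := 0) (b := 1) F 1

lemma integrableOn_exp_mul_rpow_mul_one_sub_rpow (k : ℝ) {p q : ℝ} (hp : -1 < p) (hq : -1 < q) :
    IntegrableOn (fun t => Real.exp (k * t) * (t ^ p * (1 - t) ^ q)) (Ioo 0 1) :=
  (integrableOn_Ioo_rpow_mul_one_sub_rpow hp hq).continuousOn_mul_of_subset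
    (g := fun t => Real.exp (k * t)) (by fun_prop) isCompact_Icc measurableSet_Ioo
    Ioo_subset_Icc_self

lemma integral_mul_integral_exp_mul_rpow {β T : ℝ} (θ : ℝ) (ha : -1 < a) (hc : -1 < c)
    (hbc : -2 < b + c) (hbc' : b + c < -1) (haβc : -2 < a + β + c) (hT : 0 < T) :
    ∫ s in (0 : ℝ)..T, s ^ a * (T - s) ^ b *
        ∫ t in s..T, Real.exp (θ * t) * t ^ β * (t - s) ^ c
      = T ^ (a + β) * Real.exp (θ * T) * (T ^ (b + c + 2) * ∫ x in Ioo (0 : ℝ) 1,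
          x ^ (b + c + 1) * Real.exp (-(θ * T * x)) *
            ((1 - x) ^ (a + β + c + 1) * eulerIntegral c a (a + b + c + 2) (1 - x))) := by
  have hweight : EqOn
      (fun t => T ^ β * (Real.exp (θ * T * t) * (t ^ (a + β + c + 1) * (1 - t) ^ (b + c + 1))))
      (fun t => Real.exp (θ * (T * t)) * (T * t) ^ β * (t ^ (a + c + 1) * (1 - t) ^ (b + c + 1)))
      (Ioo 0 1) := fun t ht => by
    simp only
    rw [Real.mul_rpow hT.le ht.1.le, show a + β + c + 1 = β + (a + c + 1) by ring,
      Real.rpow_add ht.1, mul_assoc θ]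
    ring
  have hint := IntegrableOn.congr_fun
    ((integrableOn_exp_mul_rpow_mul_one_sub_rpow (θ * T) (p := a + β + c + 1) (q := b + c + 1)
      (by linarith) (by linarith)).const_mul (T ^ β)) hweight measurableSet_Ioo
  rw [integral_mul_integral_eq_rpow_mul_integral_Ioo a b c _ hT,
    integral_Ioo_integral_Ioo_mul_rpow (f := fun t => Real.exp (θ * (T * t)) * (T * t) ^ β) ha hc
      hbc' (by fun_prop) hint,
    ← integral_Ioo_zero_one_comp_one_sub, ← mul_assoc _ (T ^ (b + c + 2)),
    ← MeasureTheory.integral_const_mul, ← MeasureTheory.integral_const_mul]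
  refine setIntegral_congr_fun measurableSet_Ioo fun x hx => ?_
  have hx' : 1 - x ∈ Ioo (0 : ℝ) 1 := ⟨sub_pos.2 hx.2, sub_lt_self 1 hx.1⟩
  have hexp : Real.exp (θ * T * (1 - x)) = Real.exp (θ * T) * Real.exp (-(θ * T * x)) := by
    rw [← Real.exp_add]
    ring_nf
  have hpow : T ^ (a + b + c + 2) * T ^ β = T ^ (a + β) * T ^ (b + c + 2) := by
    rw [← Real.rpow_add hT, ← Real.rpow_add hT]
    ring_nf
  have hweight_sub := hweight hx'
  simp only [hexp, sub_sub_cancel] at hweight_sub ⊢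
  rw [← hweight_sub]
  linear_combination Real.exp (θ * T) * Real.exp (-(θ * T * x)) * x ^ (b + c + 1) *
    (1 - x) ^ (a + β + c + 1) * eulerIntegral c a (a + b + c + 2) (1 - x) * hpow

end scaling

lemma tendsto_rpow_mul_eulerIntegral_one_sub {p q e : ℝ} (r : ℝ) (hp : -1 < p) (hq : -1 < q)
    (hqe : -1 < q - e) :
    Tendsto (fun x => (1 - x) ^ r * eulerIntegral p q e (1 - x)) (𝓝[>] 0)
      (𝓝 (beta (p + 1) (q - e + 1))) := by
  have hsub : Tendsto (fun x : ℝ => 1 - x) (𝓝[>] 0) (𝓝 1) :=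
    (Continuous.tendsto' (by fun_prop) 0 1 (sub_zero 1)).mono_left nhdsWithin_le_nhds
  have hmem : ∀ᶠ x : ℝ in 𝓝[>] 0, 1 - x ∈ Icc (0 : ℝ) 1 := by
    filter_upwards [Ioo_mem_nhdsGT one_pos] with x hx using
      ⟨sub_nonneg.2 hx.2.le, sub_le_self 1 hx.1.le⟩
  have heuler := (continuousOn_eulerIntegral hp hq hqe 1 (right_mem_Icc.2 zero_le_one)).tendsto.comp
    (tendsto_nhdsWithin_iff.2 ⟨hsub, hmem⟩)
  simpa only [Function.comp_def, Real.one_rpow, one_mul, eulerIntegral_one hp hqe] using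
    (hsub.rpow_const (.inl one_ne_zero)).mul heuler

lemma integrableOn_rpow_mul_eulerIntegral_one_sub {p q e r : ℝ} (hp : -1 < p) (hq : -1 < q)
    (hqe : -1 < q - e) (hr : -1 < r) :
    IntegrableOn (fun x => (1 - x) ^ r * eulerIntegral p q e (1 - x)) (Ioo 0 1) := by
  have hcont : ContinuousOn (fun x => eulerIntegral p q e (1 - x)) (Icc 0 1) :=
    (continuousOn_eulerIntegral hp hq hqe).comp (by fun_prop) fun x hx =>
      ⟨sub_nonneg.2 hx.2, sub_le_self 1 hx.1⟩
  refine IntegrableOn.mul_continuousOn_of_subset ?_ hcont measurableSet_Ioo isCompact_Icc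
    Ioo_subset_Icc_self
  simpa only [Real.rpow_zero, one_mul] using
    integrableOn_Ioo_rpow_mul_one_sub_rpow neg_one_lt_zero hr

theorem stmt_12_general {a b c β θ : ℝ} (ha : -1 < a) (hc : -1 < c) (hbc : -2 < b + c)
    (hbc' : b + c < -1) (haβc : -2 < a + β + c) (hθ : 0 < θ) :
    Tendsto (fun T : ℝ => (∫ s in (0 : ℝ)..T, s ^ a * (T - s) ^ b *
        ∫ t in s..T, Real.exp (θ * t) * t ^ β * (t - s) ^ c) / (T ^ (a + β) * Real.exp (θ * T)))
      atTop (𝓝 (Real.Gamma (c + 1) * Real.Gamma (-b - c - 1) * Real.Gamma (b + c + 2)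
        / Real.Gamma (-b) / θ ^ (b + c + 2))) := by
  have hqe : -1 < a - (a + b + c + 2) := by linarith
  have hwatson := (tendsto_integral_Ioo_rpow_mul_exp_neg_mul_smul (s := b + c + 2) (by linarith)
    one_pos
    (integrableOn_rpow_mul_eulerIntegral_one_sub (r := a + β + c + 1) hc ha hqe (by linarith))
    (tendsto_rpow_mul_eulerIntegral_one_sub _ hc ha hqe)).comp (tendsto_id.const_mul_atTop hθ)
  have hlimit : Real.Gamma (b + c + 2) * beta (c + 1) (a - (a + b + c + 2) + 1) / θ ^ (b + c + 2)
      = Real.Gamma (c + 1) * Real.Gamma (-b - c - 1) * Real.Gamma (b + c + 2) / Real.Gamma (-b)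
        / θ ^ (b + c + 2) := by
    rw [show a - (a + b + c + 2) + 1 = -b - c - 1 by ring, beta,
      show c + 1 + (-b - c - 1) = -b by ring]
    ring
  rw [← hlimit]
  refine (hwatson.div_const (θ ^ (b + c + 2))).congr' ?_
  filter_upwards [eventually_gt_atTop 0] with T hT
  rw [integral_mul_integral_exp_mul_rpow θ ha hc hbc hbc' haβc hT,
    mul_div_cancel_left₀ _ (by positivity)]
  simp only [Function.comp_apply, id, smul_eq_mul, Real.mul_rpow hθ.le hT.le,
    show b + c + 2 - 1 = b + c + 1 by ring]
  field_simp

/-- Lemma B.2, case `γ ∈ (-1, -1/2)`. -/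
theorem stmt_12 (α β γ θ : ℝ) (hα : -(1/2 : ℝ) < α)
    (hαβγ : -(3/2 : ℝ) < α + β + γ) (hγ : -1 < γ) (hγ' : γ < -(1/2 : ℝ))
    (hθ : 0 < θ)
    (h : ℝ → ℝ)
    (hdef : ∀ T : ℝ, h T = ∫ s in (0:ℝ)..T, s ^ (2*α) * (T - s) ^ γ *
      (∫ t in s..T, Real.exp (θ * t) * t ^ β * (t - s) ^ γ)) :
    Tendsto (fun T : ℝ => h T / (T ^ (2*α+β) * Real.exp (θ * T))) atTop
      (nhds ((Real.Gamma (γ+1) * Real.Gamma (-2*γ-1) * Real.Gamma (2*γ+2)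
        / Real.Gamma (-γ)) / θ ^ (2*γ+2))) := by
  have hlim := stmt_12_general (a := 2 * α) (b := γ) (c := γ) (β := β) (θ := θ)
    (by linarith) hγ (by linarith) (by linarith) (by linarith) hθ
  simpa only [hdef, show -2 * γ - 1 = -γ - γ - 1 by ring, two_mul γ] using hlim
end

section
/- Let α, β, γ be real numbers with α > -1/2, α + β + γ > -3/2, γ ∈ (−1, −1/2), and let θ > 0. Define G(T) = e^{−2θT} ∫₀ᵀ s^{2α} (∫ₛᵀ e^{θt} t^β (t−s)^γ dt)² ds for T > 0. Then lim_{T→+∞} G(T) / T^{2α+2β} = σ² / θ^{2γ+3}, where σ² = Γ(γ+1)Γ(−2γ−1)Γ(2γ+2) / Γ(−γ). -/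
open MeasureTheory Filter intervalIntegral

/-!
In the times `u = θ (T - s)` and `v = θ (T - t)` to the horizon, the normalized second moment is
`θ ^ -(2γ + 3)` times the same quantity with `θ = 1` and horizon `θ T`. There the weights
`(1 - u/T)^{2α}` and `(1 - v/T)^β` tend to one, so the limit should be the squared `L²` norm of
`e^{-x} 1_{x > 0} ⋆ x₊^γ`. Writing such a norm as the integral of the product of the two
autocorrelations, here `e^{-|h|} / 2` and a multiple of `|h|^{2γ + 1}`, gives its value.

Dominated convergence applies on `u ≤ T / 2`, where the weights are bounded. On `u > T / 2` the
bound `e^{-v} ≤ v^{-p}` for a suitable `p < 1` makes the integrand homogeneous, and scaling shows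
that its integral decays like a negative power of `T`.
-/

open ProbabilityTheory (beta beta_pos)
open scoped ENNReal Topology

section Autocorrelation

variable {G : Type*} [AddCommGroup G] [MeasurableSpace G]

/-- The autocorrelation `h ↦ ∫ f x f (x + h) dx` of a nonnegative function. -/
noncomputable def autocorr (f : G → ℝ≥0∞) (μ : Measure G) (h : G) : ℝ≥0∞ :=
  ∫⁻ x, f x * f (x + h) ∂μ

variable [MeasurableAdd₂ G] {μ : Measure G} [μ.IsAddLeftInvariant]

lemma autocorr_neg (f : G → ℝ≥0∞) (h : G) : autocorr f μ (-h) = autocorr f μ h := by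
  rw [autocorr, ← lintegral_add_right_eq_self _ h]
  simp only [add_neg_cancel_right, mul_comm, autocorr]

lemma lintegral_mul_shift_mul_shift (g : G → ℝ≥0∞) (v w : G) :
    ∫⁻ u, g (-v + u) * g (-w + u) ∂μ = autocorr g μ (w - v) := by
  rw [← lintegral_add_left_eq_self _ w, autocorr]
  refine lintegral_congr fun u => ?_
  rw [neg_add_cancel_left, mul_comm, show -v + (w + u) = u + (w - v) by abel]

lemma lintegral_lconvolution_sq [SFinite μ] [MeasurableNeg G] {f g : G → ℝ≥0∞} (hf : Measurable f)
    (hg : Measurable g) :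
    ∫⁻ u, (f ⋆ₗ[μ] g) u ^ 2 ∂μ = ∫⁻ h, autocorr f μ h * autocorr g μ h ∂μ := by
  have hac : Measurable (autocorr g μ) := by unfold autocorr; fun_prop
  calc ∫⁻ u, (f ⋆ₗ[μ] g) u ^ 2 ∂μ
      = ∫⁻ u, ∫⁻ v, ∫⁻ w, f v * g (-v + u) * (f w * g (-w + u)) ∂μ ∂μ ∂μ := by
        refine lintegral_congr fun u => ?_
        rw [lintegral_lintegral_mul (by fun_prop) (by fun_prop), sq, lconvolution_def]
    _ = ∫⁻ v, ∫⁻ w, ∫⁻ u, f v * g (-v + u) * (f w * g (-w + u)) ∂μ ∂μ ∂μ := by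
        rw [lintegral_lintegral_swap (by fun_prop)]
        exact lintegral_congr fun v => lintegral_lintegral_swap (by fun_prop)
    _ = ∫⁻ v, ∫⁻ w, f v * f w * autocorr g μ (w - v) ∂μ ∂μ := by
        refine lintegral_congr fun v => lintegral_congr fun w => ?_
        rw [← lintegral_mul_shift_mul_shift, ← lintegral_const_mul _ (by fun_prop)]
        exact lintegral_congr fun u => mul_mul_mul_comm ..
    _ = ∫⁻ v, ∫⁻ h, f v * f (v + h) * autocorr g μ h ∂μ ∂μ := by
        refine lintegral_congr fun v => ?_
        rw [← lintegral_add_left_eq_self _ v]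
        simp only [add_sub_cancel_left]
    _ = ∫⁻ h, autocorr f μ h * autocorr g μ h ∂μ := by
        rw [lintegral_lintegral_swap (by fun_prop)]
        exact lintegral_congr fun h => lintegral_mul_const _ (by fun_prop)

end Autocorrelation

lemma lintegral_eq_two_mul_setLIntegral_Ioi_of_even {f : ℝ → ℝ≥0∞} (hf : ∀ x, f (-x) = f x) :
    ∫⁻ x, f x = 2 * ∫⁻ x in Set.Ioi 0, f x := by
  have hneg : ∫⁻ x in Set.Iic 0, f x = ∫⁻ x in Set.Ioi 0, f x := by
    rw [setLIntegral_congr Iio_ae_eq_Iic.symm, ← lintegral_indicator measurableSet_Iio,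
      ← lintegral_neg_eq_self, ← lintegral_indicator measurableSet_Ioi]
    refine lintegral_congr fun x => ?_
    simp [Set.indicator_apply, hf]
  rw [← lintegral_add_compl f measurableSet_Iic, Set.compl_Iic, hneg, two_mul]

lemma lintegral_eq_mul_lintegral_comp_mul_left (f : ℝ → ℝ≥0∞) {c : ℝ} (hc : 0 < c) :
    ∫⁻ x, f x = ENNReal.ofReal c * ∫⁻ x, f (c * x) := by
  have hmap := (Homeomorph.mulLeft₀ c hc.ne').measurableEmbedding.lintegral_map
    (μ := volume) f
  rw [Homeomorph.coe_mulLeft₀] at hmap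
  rw [← hmap, ← smul_eq_mul, ← lintegral_smul_measure]
  nth_rw 1 [← Real.smul_map_volume_mul_left hc.ne', abs_of_pos hc]

lemma lconvolution_eq_setLIntegral_Ioo {f g : ℝ → ℝ≥0∞} (hf : ∀ x ≤ 0, f x = 0)
    (hg : ∀ x ≤ 0, g x = 0) (u : ℝ) :
    (f ⋆ₗ g) u = ∫⁻ v in Set.Ioo 0 u, f v * g (u - v) := by
  rw [← lintegral_indicator measurableSet_Ioo, lconvolution_def]
  refine lintegral_congr fun v => ?_
  rw [neg_add_eq_sub]
  by_cases hv : v ∈ Set.Ioo 0 u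
  · rw [Set.indicator_of_mem hv]
  · rw [Set.indicator_of_notMem hv]
    rcases le_or_gt v 0 with h0 | h0
    · rw [hf v h0, zero_mul]
    · rw [hg _ (sub_nonpos.2 (not_lt.1 fun hu => hv ⟨h0, hu⟩)), mul_zero]

section TruncatedPower

/-- The truncated power `x₊ ^ r`, which vanishes for `x ≤ 0` whatever the sign of `r`. -/
noncomputable def posRpow (r : ℝ) : ℝ → ℝ≥0∞ :=
  (Set.Ioi 0).indicator fun x => ENNReal.ofReal (x ^ r)

variable {r a b c x y h : ℝ}

lemma posRpow_of_pos (r : ℝ) (hx : 0 < x) : posRpow r x = ENNReal.ofReal (x ^ r) :=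
  Set.indicator_of_mem (Set.mem_Ioi.2 hx) _

lemma posRpow_of_nonpos (r : ℝ) (hx : x ≤ 0) : posRpow r x = 0 :=
  Set.indicator_of_notMem (Set.notMem_Ioi.2 hx) _

lemma posRpow_ne_top (r x : ℝ) : posRpow r x ≠ ∞ := by
  unfold posRpow Set.indicator
  split_ifs <;> simp

@[fun_prop]
lemma measurable_posRpow (r : ℝ) : Measurable (posRpow r) :=
  Measurable.indicator (by fun_prop) measurableSet_Ioi

lemma posRpow_mul_posRpow (r s x : ℝ) : posRpow r x * posRpow s x = posRpow (r + s) x := by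
  rcases le_or_gt x 0 with hx | hx
  · simp [posRpow_of_nonpos _ hx]
  · simp only [posRpow_of_pos _ hx, Real.rpow_add hx, ENNReal.ofReal_mul (Real.rpow_nonneg hx.le _)]

lemma posRpow_sq (r x : ℝ) : posRpow r x ^ 2 = posRpow (2 * r) x := by
  rw [sq, posRpow_mul_posRpow, two_mul]

lemma posRpow_mul_left (hc : 0 < c) (r x : ℝ) :
    posRpow r (c * x) = ENNReal.ofReal (c ^ r) * posRpow r x := by
  rcases le_or_gt x 0 with hx | hx
  · simp [posRpow_of_nonpos _ hx, posRpow_of_nonpos _ (mul_nonpos_of_nonneg_of_nonpos hc.le hx)]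
  · rw [posRpow_of_pos _ (mul_pos hc hx), posRpow_of_pos _ hx, Real.mul_rpow hc.le hx.le,
      ENNReal.ofReal_mul (by positivity)]

lemma posRpow_le_rpow_neg_abs (r : ℝ) (hc : 0 < c) (hcx : c ≤ x) (hx : x ≤ 1) :
    posRpow r x ≤ ENNReal.ofReal (c ^ (-|r|)) := by
  have hx0 : 0 < x := hc.trans_le hcx
  rw [posRpow_of_pos _ hx0]
  refine ENNReal.ofReal_le_ofReal ?_
  calc x ^ r ≤ x ^ (-|r|) := Real.rpow_le_rpow_of_exponent_ge hx0 hx (neg_abs_le r)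
    _ ≤ c ^ (-|r|) := Real.rpow_le_rpow_of_nonpos hc hcx (neg_nonpos.2 (abs_nonneg r))

lemma tendsto_posRpow_one_sub_div (r v : ℝ) :
    Tendsto (fun T : ℝ => posRpow r (1 - v / T)) atTop (𝓝 1) := by
  have hbase : Tendsto (fun T : ℝ => 1 - v / T) atTop (𝓝 1) := by
    simpa using (tendsto_const_nhds (x := (1 : ℝ))).sub (tendsto_const_nhds.div_atTop tendsto_id)
  have hpow : Tendsto (fun T : ℝ => ENNReal.ofReal ((1 - v / T) ^ r)) atTop (𝓝 1) := by
    simpa using ENNReal.tendsto_ofReal (hbase.rpow_const (p := r) (Or.inl one_ne_zero))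
  refine hpow.congr' ?_
  filter_upwards [hbase.eventually (lt_mem_nhds one_pos)] with T hT
  exact (posRpow_of_pos r hT).symm

lemma posRpow_sub_add_le (ha : 0 ≤ a) (hx : 0 < x) (hy : 0 < y) (hxy : x + y ≤ 1) :
    posRpow (b - a) (x + y) ≤ posRpow (-a) x * posRpow (min b 0) y := by
  have h0 : 0 < x + y := add_pos hx hy
  rw [posRpow_of_pos _ h0, posRpow_of_pos _ hx, posRpow_of_pos _ hy,
    ← ENNReal.ofReal_mul (by positivity), sub_eq_neg_add, Real.rpow_add h0]
  refine ENNReal.ofReal_le_ofReal (mul_le_mul ?_ ?_ (by positivity) (by positivity))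
  · exact Real.rpow_le_rpow_of_nonpos hx (by linarith) (neg_nonpos.2 ha)
  · calc (x + y) ^ b ≤ (x + y) ^ min b 0 :=
          Real.rpow_le_rpow_of_exponent_ge h0 hxy (min_le_left _ _)
      _ ≤ y ^ min b 0 := Real.rpow_le_rpow_of_nonpos hy (by linarith) (min_le_right _ _)

lemma lintegral_posRpow_mul_exp_neg_mul (ha : 0 < a) (hr : 0 < r) :
    ∫⁻ x, posRpow (a - 1) x * ENNReal.ofReal (Real.exp (-(r * x))) =
      ENNReal.ofReal (Real.Gamma a * r ^ (-a)) := by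
  have hint : IntegrableOn (fun x : ℝ => x ^ (a - 1) * Real.exp (-(r * x))) (Set.Ioi 0) := by
    simpa using integrableOn_rpow_mul_exp_neg_mul_rpow (s := a - 1) (by linarith) one_pos hr
  rw [Real.rpow_neg hr.le, ← Real.inv_rpow hr.le, ← one_div, mul_comm,
    ← Real.integral_rpow_mul_exp_neg_mul_Ioi ha hr, ofReal_integral_eq_lintegral_ofReal hint,
    ← lintegral_indicator measurableSet_Ioi]
  · refine lintegral_congr fun x => ?_
    rcases le_or_gt x 0 with hx | hx
    · simp [posRpow_of_nonpos _ hx, hx]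
    · simp [posRpow_of_pos _ hx, hx, ENNReal.ofReal_mul (Real.rpow_nonneg hx.le _)]
  · filter_upwards [ae_restrict_mem measurableSet_Ioi] with x hx
    exact mul_nonneg (Real.rpow_nonneg (le_of_lt hx) _) (Real.exp_pos _).le

lemma lintegral_posRpow_mul_posRpow_one_sub (ha : 0 < a) (hb : 0 < b) :
    ∫⁻ x, posRpow (a - 1) x * posRpow (b - 1) (1 - x) = ENNReal.ofReal (beta a b) := by
  have hβ := beta_pos ha hb
  rw [← mul_one (ENNReal.ofReal _), ← ProbabilityTheory.lintegral_betaPDF_eq_one ha hb,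
    ← lintegral_const_mul _ (by unfold ProbabilityTheory.betaPDF; fun_prop)]
  refine lintegral_congr fun x => ?_
  rcases le_or_gt x 0 with hx | hx
  · simp [posRpow_of_nonpos _ hx, ProbabilityTheory.betaPDF_eq_zero_of_nonpos hx]
  rcases le_or_gt 1 x with hx1 | hx1
  · simp [posRpow_of_nonpos _ (sub_nonpos.2 hx1), ProbabilityTheory.betaPDF_eq_zero_of_one_le hx1]
  · rw [posRpow_of_pos _ hx, posRpow_of_pos _ (sub_pos.2 hx1),
      ProbabilityTheory.betaPDF_of_pos_lt_one hx hx1, ← ENNReal.ofReal_mul (by positivity),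
      ← ENNReal.ofReal_mul (by positivity)]
    congr 1
    field_simp

lemma lconvolution_posRpow (ha : 0 < a) (hb : 0 < b) (u : ℝ) :
    (posRpow (a - 1) ⋆ₗ posRpow (b - 1)) u =
      ENNReal.ofReal (beta a b) * posRpow (a + b - 1) u := by
  rcases le_or_gt u 0 with hu | hu
  · rw [lconvolution_eq_setLIntegral_Ioo (fun x => posRpow_of_nonpos _)
      (fun x => posRpow_of_nonpos _), Set.Ioo_eq_empty_of_le hu, posRpow_of_nonpos _ hu]
    simp
  have hscale (x : ℝ) : posRpow (a - 1) (u * x) * posRpow (b - 1) (-(u * x) + u) =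
      ENNReal.ofReal (u ^ (a - 1)) * ENNReal.ofReal (u ^ (b - 1)) *
        (posRpow (a - 1) x * posRpow (b - 1) (1 - x)) := by
    rw [show -(u * x) + u = u * (1 - x) by ring, posRpow_mul_left hu, posRpow_mul_left hu]
    ring
  have hpow : u * (u ^ (a - 1) * u ^ (b - 1)) = u ^ (a + b - 1) := by
    rw [show a + b - 1 = 1 + (a - 1 + (b - 1)) by ring, Real.rpow_add hu, Real.rpow_add hu,
      Real.rpow_one]
  rw [lconvolution_def, lintegral_eq_mul_lintegral_comp_mul_left _ hu]
  simp_rw [hscale]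
  rw [lintegral_const_mul _ (by fun_prop), lintegral_posRpow_mul_posRpow_one_sub ha hb,
    posRpow_of_pos _ hu, ← hpow, ENNReal.ofReal_mul hu.le, ENNReal.ofReal_mul (by positivity)]
  ring

lemma lintegral_posRpow_mul_exp_neg_add_mul (ha : 0 < a) (h : ℝ) (hr : 0 < r) :
    ∫⁻ x, posRpow (a - 1) x * ENNReal.ofReal (Real.exp (-((x + h) * r))) =
      ENNReal.ofReal (Real.Gamma a) * posRpow (-a) r * ENNReal.ofReal (Real.exp (-(h * r))) := by
  have hsplit (x : ℝ) : ENNReal.ofReal (Real.exp (-((x + h) * r))) =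
      ENNReal.ofReal (Real.exp (-(r * x))) * ENNReal.ofReal (Real.exp (-(h * r))) := by
    rw [← ENNReal.ofReal_mul (Real.exp_pos _).le, ← Real.exp_add]
    ring_nf
  simp_rw [hsplit, ← mul_assoc]
  rw [lintegral_mul_const _ (by fun_prop), lintegral_posRpow_mul_exp_neg_mul ha hr,
    ENNReal.ofReal_mul (Real.Gamma_pos_of_pos ha).le, ← posRpow_of_pos _ hr]

-- Expand the factor `(x + h) ^ -(a + b)` as a Laplace transform and integrate over `x` first.
lemma lintegral_posRpow_mul_posRpow_add (ha : 0 < a) (hb : 0 < b) (hh : 0 < h) :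
    ∫⁻ x, posRpow (a - 1) x * posRpow (-(a + b)) (x + h) =
      ENNReal.ofReal (beta a b * h ^ (-b)) := by
  have hΓ : 0 < Real.Gamma (a + b) := Real.Gamma_pos_of_pos (by positivity)
  have hΓa : 0 < Real.Gamma a := Real.Gamma_pos_of_pos ha
  have hlaplace (x : ℝ) : ENNReal.ofReal (Real.Gamma (a + b)) *
      (posRpow (a - 1) x * posRpow (-(a + b)) (x + h)) =
      ∫⁻ l, posRpow (a + b - 1) l *
        (posRpow (a - 1) x * ENNReal.ofReal (Real.exp (-((x + h) * l)))) := by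
    rcases le_or_gt x 0 with hx | hx
    · simp [posRpow_of_nonpos _ hx]
    · have hxh : 0 < x + h := add_pos hx hh
      simp_rw [mul_left_comm (posRpow (a + b - 1) _)]
      rw [lintegral_const_mul _ (by fun_prop),
        lintegral_posRpow_mul_exp_neg_mul (by positivity) hxh, ENNReal.ofReal_mul hΓ.le,
        posRpow_of_pos _ hxh, mul_left_comm]
  have hinner (l : ℝ) : ∫⁻ x, posRpow (a + b - 1) l *
      (posRpow (a - 1) x * ENNReal.ofReal (Real.exp (-((x + h) * l)))) =
      ENNReal.ofReal (Real.Gamma a) *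
        (posRpow (b - 1) l * ENNReal.ofReal (Real.exp (-(h * l)))) := by
    rcases le_or_gt l 0 with hl | hl
    · simp [posRpow_of_nonpos _ hl]
    · rw [lintegral_const_mul _ (by fun_prop), lintegral_posRpow_mul_exp_neg_add_mul ha h hl,
        show b - 1 = a + b - 1 + -a by ring, ← posRpow_mul_posRpow (a + b - 1) (-a)]
      ring
  rw [← ENNReal.mul_right_inj (by simpa using hΓ) ENNReal.ofReal_ne_top,
    ← lintegral_const_mul _ (by fun_prop)]
  simp_rw [hlaplace]
  rw [lintegral_lintegral_swap (by fun_prop)]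
  simp_rw [hinner]
  rw [lintegral_const_mul _ (by fun_prop), lintegral_posRpow_mul_exp_neg_mul hb hh,
    ← ENNReal.ofReal_mul hΓa.le, ← ENNReal.ofReal_mul hΓ.le, beta]
  congr 1
  field_simp

end TruncatedPower

/-- The one-sided exponential `x ↦ e^{-x}`, extended by zero to `x ≤ 0`. -/
noncomputable def posExp : ℝ → ℝ≥0∞ :=
  (Set.Ioi 0).indicator fun x => ENNReal.ofReal (Real.exp (-x))

lemma posExp_of_pos {x : ℝ} (hx : 0 < x) : posExp x = ENNReal.ofReal (Real.exp (-x)) :=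
  Set.indicator_of_mem (Set.mem_Ioi.2 hx) _

lemma posExp_of_nonpos {x : ℝ} (hx : x ≤ 0) : posExp x = 0 :=
  Set.indicator_of_notMem (Set.notMem_Ioi.2 hx) _

lemma posExp_ne_top (x : ℝ) : posExp x ≠ ∞ := by
  unfold posExp Set.indicator
  split_ifs <;> simp

@[fun_prop]
lemma measurable_posExp : Measurable posExp :=
  Measurable.indicator (by fun_prop) measurableSet_Ioi

lemma posExp_le_posRpow_neg {p : ℝ} (hp : 0 ≤ p) (hp1 : p ≤ 1) (x : ℝ) :
    posExp x ≤ posRpow (-p) x := by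
  rcases le_or_gt x 0 with hx | hx
  · simp [posExp_of_nonpos hx]
  rw [posExp_of_pos hx, posRpow_of_pos _ hx, Real.exp_neg, Real.rpow_neg hx.le]
  refine ENNReal.ofReal_le_ofReal (inv_anti₀ (Real.rpow_pos_of_pos hx p) ?_)
  calc x ^ p ≤ Real.exp x ^ p :=
        Real.rpow_le_rpow hx.le (by linarith [Real.add_one_le_exp x]) hp
    _ ≤ Real.exp x ^ (1 : ℝ) := Real.rpow_le_rpow_of_exponent_le (Real.one_le_exp hx.le) hp1
    _ = Real.exp x := Real.rpow_one _

lemma autocorr_posExp {h : ℝ} (hh : 0 ≤ h) :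
    autocorr posExp volume h = ENNReal.ofReal (Real.exp (-h) / 2) := by
  have hpt (x : ℝ) : posExp x * posExp (x + h) =
      ENNReal.ofReal (Real.exp (-h)) *
        (posRpow (1 - 1) x * ENNReal.ofReal (Real.exp (-(2 * x)))) := by
    rcases le_or_gt x 0 with hx | hx
    · simp [posExp_of_nonpos hx, posRpow_of_nonpos _ hx]
    · rw [posExp_of_pos hx, posExp_of_pos (by positivity), posRpow_of_pos _ hx, sub_self,
        Real.rpow_zero, ENNReal.ofReal_one, one_mul, ← ENNReal.ofReal_mul (Real.exp_pos _).le,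
        ← ENNReal.ofReal_mul (Real.exp_pos _).le, ← Real.exp_add, ← Real.exp_add]
      ring_nf
  simp_rw [autocorr, hpt]
  rw [lintegral_const_mul _ (by fun_prop), lintegral_posRpow_mul_exp_neg_mul one_pos two_pos,
    ← ENNReal.ofReal_mul (Real.exp_pos _).le, Real.Gamma_one, one_mul, Real.rpow_neg_one,
    div_eq_mul_inv]

lemma autocorr_posRpow {γ h : ℝ} (hγ : -1 < γ) (hγ' : γ < -(1 / 2)) (hh : 0 < h) :
    autocorr (posRpow γ) volume h =
      ENNReal.ofReal (beta (γ + 1) (-2 * γ - 1) * h ^ (2 * γ + 1)) := by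
  have hbeta := lintegral_posRpow_mul_posRpow_add (a := γ + 1) (b := -2 * γ - 1)
    (by linarith) (by linarith) hh
  rwa [add_sub_cancel_right, show -(γ + 1 + (-2 * γ - 1)) = γ by ring,
    show -(-2 * γ - 1) = 2 * γ + 1 by ring] at hbeta

lemma lintegral_lconvolution_posExp_posRpow_sq {γ : ℝ} (hγ : -1 < γ) (hγ' : γ < -(1 / 2)) :
    ∫⁻ u, (posExp ⋆ₗ posRpow γ) u ^ 2 =
      ENNReal.ofReal (beta (γ + 1) (-2 * γ - 1) * Real.Gamma (2 * γ + 2)) := by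
  have hβ : 0 < beta (γ + 1) (-2 * γ - 1) := beta_pos (by linarith) (by linarith)
  have hpt (h : ℝ) : (Set.Ioi 0).indicator
      (fun h => autocorr posExp volume h * autocorr (posRpow γ) volume h) h =
      ENNReal.ofReal (beta (γ + 1) (-2 * γ - 1) / 2) *
        (posRpow (2 * γ + 2 - 1) h * ENNReal.ofReal (Real.exp (-(1 * h)))) := by
    rcases le_or_gt h 0 with hh | hh
    · simp [posRpow_of_nonpos _ hh, hh]
    · rw [Set.indicator_of_mem (Set.mem_Ioi.2 hh), autocorr_posExp hh.le,
        autocorr_posRpow hγ hγ' hh, posRpow_of_pos _ hh, ← ENNReal.ofReal_mul (by positivity),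
        ← ENNReal.ofReal_mul (by positivity), ← ENNReal.ofReal_mul (by positivity)]
      ring_nf
  rw [lintegral_lconvolution_sq measurable_posExp (measurable_posRpow γ),
    lintegral_eq_two_mul_setLIntegral_Ioi_of_even fun h => by rw [autocorr_neg, autocorr_neg],
    ← lintegral_indicator measurableSet_Ioi]
  simp_rw [hpt]
  rw [lintegral_const_mul _ (by fun_prop),
    lintegral_posRpow_mul_exp_neg_mul (by linarith) one_pos, Real.one_rpow, mul_one,
    ← ENNReal.ofReal_mul (by positivity), ← ENNReal.ofReal_ofNat 2,
    ← ENNReal.ofReal_mul zero_le_two]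
  ring_nf

lemma lconvolution_posExp_posRpow_ne_top {γ : ℝ} (hγ : -1 < γ) (u : ℝ) :
    (posExp ⋆ₗ posRpow γ) u ≠ ∞ := by
  have hle : (posExp ⋆ₗ posRpow γ) u ≤ (posRpow (1 - 1) ⋆ₗ posRpow (γ + 1 - 1)) u := by
    rw [add_sub_cancel_right, sub_self, ← neg_zero]
    exact lintegral_mono fun v => mul_le_mul_left (posExp_le_posRpow_neg le_rfl zero_le_one v) _
  rw [lconvolution_posRpow one_pos (by linarith)] at hle
  exact ne_top_of_le_ne_top (ENNReal.mul_ne_top ENNReal.ofReal_ne_top (posRpow_ne_top _ _)) hle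

/-- The inner integral `∫₀ᵘ e^{-v} (1 - v/T)^β (u - v)^γ dv` of the second moment with `θ = 1` and
horizon `T`, in the times `u = T - s` and `v = T - t` to the horizon. -/
noncomputable def weightedConv (β γ T : ℝ) : ℝ → ℝ≥0∞ :=
  (fun v => posExp v * posRpow β (1 - v / T)) ⋆ₗ posRpow γ

/-- The outer integrand `(1 - u/T)^{2α} (∫₀ᵘ e^{-v} (1 - v/T)^β (u - v)^γ dv)²` of the second moment
with `θ = 1` and horizon `T`, extended by zero outside `(0, T)`. -/
noncomputable def horizonIntegrand (α β γ T u : ℝ) : ℝ≥0∞ :=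
  posRpow (2 * α) (1 - u / T) * weightedConv β γ T u ^ 2

section Horizon

variable {α β γ θ a c p T u : ℝ}

@[fun_prop]
lemma measurable_weightedConv (β γ T : ℝ) : Measurable (weightedConv β γ T) :=
  measurable_lconvolution _ (by fun_prop) (by fun_prop)

@[fun_prop]
lemma measurable_horizonIntegrand (α β γ T : ℝ) : Measurable (horizonIntegrand α β γ T) := by
  unfold horizonIntegrand
  fun_prop

lemma weightedConv_eq_setLIntegral (β γ T u : ℝ) :
    weightedConv β γ T u =
      ∫⁻ v in Set.Ioo 0 u, posExp v * posRpow β (1 - v / T) * posRpow γ (u - v) :=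
  lconvolution_eq_setLIntegral_Ioo (fun v hv => by rw [posExp_of_nonpos hv, zero_mul])
    (fun _ => posRpow_of_nonpos γ) u

lemma horizonIntegrand_eq_zero_of_nonpos (hu : u ≤ 0) : horizonIntegrand α β γ T u = 0 := by
  simp [horizonIntegrand, weightedConv_eq_setLIntegral, Set.Ioo_eq_empty_of_le hu]

lemma horizonIntegrand_eq_zero_of_ge (hT : 0 < T) (hu : T ≤ u) :
    horizonIntegrand α β γ T u = 0 := by
  rw [horizonIntegrand, posRpow_of_nonpos _ (sub_nonpos.2 ((one_le_div hT).2 hu)), zero_mul]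

lemma posRpow_one_sub_div_le (hc : 0 < c) (hT : 0 < T) (hcu : c ≤ 1 - u / T) {v : ℝ} (hv : 0 ≤ v)
    (hvu : v ≤ u) : posRpow β (1 - v / T) ≤ ENNReal.ofReal (c ^ (-|β|)) := by
  refine posRpow_le_rpow_neg_abs β hc (hcu.trans (by gcongr)) ?_
  linarith [div_nonneg hv hT.le]

lemma weightedConv_le_lconvolution (γ : ℝ) (hc : 0 < c) (hT : 0 < T) (hcu : c ≤ 1 - u / T) :
    weightedConv β γ T u ≤ ENNReal.ofReal (c ^ (-|β|)) * (posExp ⋆ₗ posRpow γ) u := by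
  rw [weightedConv_eq_setLIntegral, lconvolution_eq_setLIntegral_Ioo
    (fun _ => posExp_of_nonpos) (fun _ => posRpow_of_nonpos γ),
    ← lintegral_const_mul _ (by fun_prop)]
  refine setLIntegral_mono (by fun_prop) fun v hv => ?_
  rw [mul_comm (posExp v), mul_assoc]
  gcongr
  exact posRpow_one_sub_div_le hc hT hcu hv.1.le hv.2.le

lemma weightedConv_ne_top (hγ : -1 < γ) (hT : 0 < T) (huT : u < T) : weightedConv β γ T u ≠ ∞ :=
  ne_top_of_le_ne_top
    (ENNReal.mul_ne_top ENNReal.ofReal_ne_top (lconvolution_posExp_posRpow_ne_top hγ u))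
    (weightedConv_le_lconvolution γ (sub_pos.2 ((div_lt_one hT).2 huT)) hT le_rfl)

lemma half_le_one_sub_div (hT : 0 < T) (hu : u ≤ T / 2) : 1 / 2 ≤ 1 - u / T := by
  have : u / T ≤ 1 / 2 := by rw [div_le_iff₀ hT]; linarith
  linarith

lemma tendsto_weightedConv (β : ℝ) (hγ : -1 < γ) (u : ℝ) :
    Tendsto (fun T => weightedConv β γ T u) atTop (𝓝 ((posExp ⋆ₗ posRpow γ) u)) := by
  have hconv := lconvolution_eq_setLIntegral_Ioo (f := posExp) (g := posRpow γ)
    (fun _ => posExp_of_nonpos) (fun _ => posRpow_of_nonpos γ) u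
  simp_rw [weightedConv_eq_setLIntegral]
  rw [hconv]
  refine tendsto_lintegral_filter_of_dominated_convergence
    (fun v => ENNReal.ofReal ((1 / 2) ^ (-|β|)) * (posExp v * posRpow γ (u - v)))
    (Eventually.of_forall fun T => by fun_prop) ?_ ?_ (ae_of_all _ fun v => ?_)
  · filter_upwards [eventually_gt_atTop 0, eventually_ge_atTop (2 * u)] with T hT hTu
    filter_upwards [ae_restrict_mem measurableSet_Ioo] with v hv
    rw [mul_comm (posExp v), mul_assoc]
    gcongr
    exact posRpow_one_sub_div_le one_half_pos hT (half_le_one_sub_div hT (by linarith)) hv.1.le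
      hv.2.le
  · rw [lintegral_const_mul _ (by fun_prop), ← hconv]
    exact ENNReal.mul_ne_top ENNReal.ofReal_ne_top (lconvolution_posExp_posRpow_ne_top hγ u)
  · simpa using ENNReal.Tendsto.mul_const (ENNReal.Tendsto.const_mul
      (tendsto_posRpow_one_sub_div β v) (Or.inr (posExp_ne_top v)))
      (Or.inr (posRpow_ne_top γ (u - v)))

lemma horizonIntegrand_le_lconvolution_sq (α β γ : ℝ) (hT : 0 < T) (hu : u ≤ T / 2) :
    horizonIntegrand α β γ T u ≤
      ENNReal.ofReal ((1 / 2) ^ (-|2 * α|)) * ENNReal.ofReal ((1 / 2) ^ (-|β|)) ^ 2 *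
        (posExp ⋆ₗ posRpow γ) u ^ 2 := by
  rcases le_or_gt u 0 with hu0 | hu0
  · simp [horizonIntegrand_eq_zero_of_nonpos hu0]
  have hhalf := half_le_one_sub_div hT hu
  rw [horizonIntegrand, mul_assoc, ← mul_pow]
  gcongr
  · exact posRpow_one_sub_div_le one_half_pos hT hhalf hu0.le le_rfl
  · exact weightedConv_le_lconvolution γ one_half_pos hT hhalf

lemma tendsto_horizonIntegrand (α β : ℝ) (hγ : -1 < γ) (u : ℝ) :
    Tendsto (fun T => horizonIntegrand α β γ T u) atTop (𝓝 ((posExp ⋆ₗ posRpow γ) u ^ 2)) := by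
  simpa only [horizonIntegrand, one_mul] using
    ENNReal.Tendsto.mul (tendsto_posRpow_one_sub_div (2 * α) u) (Or.inl one_ne_zero)
    (ENNReal.Tendsto.pow (tendsto_weightedConv β hγ u) (n := 2)) (Or.inr ENNReal.one_ne_top)

lemma tendsto_setLIntegral_Iic_horizonIntegrand (α β : ℝ) (hγ : -1 < γ) (hγ' : γ < -(1 / 2)) :
    Tendsto (fun T => ∫⁻ u in Set.Iic (T / 2), horizonIntegrand α β γ T u) atTop
      (𝓝 (∫⁻ u, (posExp ⋆ₗ posRpow γ) u ^ 2)) := by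
  simp_rw [← lintegral_indicator measurableSet_Iic]
  refine tendsto_lintegral_filter_of_dominated_convergence
    (fun u => ENNReal.ofReal ((1 / 2) ^ (-|2 * α|)) * ENNReal.ofReal ((1 / 2) ^ (-|β|)) ^ 2 *
      (posExp ⋆ₗ posRpow γ) u ^ 2)
    (Eventually.of_forall fun T => by measurability) ?_ ?_ (ae_of_all _ fun u => ?_)
  · filter_upwards [eventually_gt_atTop 0] with T hT
    exact ae_of_all _ fun u => Set.indicator_le
      (fun u hu => horizonIntegrand_le_lconvolution_sq α β γ hT hu) u
  · rw [lintegral_const_mul _ (by fun_prop), lintegral_lconvolution_posExp_posRpow_sq hγ hγ']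
    finiteness
  · refine (tendsto_horizonIntegrand α β hγ u).congr' ?_
    filter_upwards [eventually_ge_atTop (2 * u)] with T hT
    exact (Set.indicator_of_mem (Set.mem_Iic.2 (by linarith)) _).symm

lemma posRpow_one_sub_div_le_mul (β : ℝ) (ha : 0 ≤ a) (hT : 0 < T) (huT : u < T) {v : ℝ}
    (hv : v ∈ Set.Ioo 0 u) :
    posRpow β (1 - v / T) ≤ posRpow (-a) (1 - u / T) *
      (ENNReal.ofReal (T ^ (-min (β + a) 0)) * posRpow (min (β + a) 0) (u - v)) := by
  have hsplit := posRpow_sub_add_le (b := β + a) ha (x := 1 - u / T) (y := T⁻¹ * (u - v))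
    (sub_pos.2 ((div_lt_one hT).2 huT)) (mul_pos (inv_pos.2 hT) (sub_pos.2 hv.2))
  rw [show 1 - u / T + T⁻¹ * (u - v) = 1 - v / T by ring, add_sub_cancel_right,
    posRpow_mul_left (inv_pos.2 hT), Real.inv_rpow hT.le, ← Real.rpow_neg hT.le] at hsplit
  exact hsplit (by linarith [div_nonneg hv.1.le hT.le])

lemma weightedConv_le_posRpow (ha : 0 ≤ a) (hp : 0 ≤ p) (hp1 : p < 1)
    (hγ : -1 < min (β + a) 0 + γ) (hT : 0 < T) (huT : u < T) :
    weightedConv β γ T u ≤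
      ENNReal.ofReal (T ^ (-min (β + a) 0) * beta (1 - p) (min (β + a) 0 + γ + 1)) *
        (posRpow (-a) (1 - u / T) * posRpow (min (β + a) 0 + γ + 1 - p) u) := by
  set m := min (β + a) 0
  have hconv := lconvolution_posRpow (a := 1 - p) (b := m + γ + 1) (by linarith) (by linarith) u
  rw [lconvolution_eq_setLIntegral_Ioo (fun _ => posRpow_of_nonpos _)
    (fun _ => posRpow_of_nonpos _), add_sub_cancel_right, sub_sub_cancel_left,
    show 1 - p + (m + γ + 1) - 1 = m + γ + 1 - p by ring] at hconv
  calc weightedConv β γ T u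
      ≤ ∫⁻ v in Set.Ioo 0 u, posRpow (-a) (1 - u / T) * ENNReal.ofReal (T ^ (-m)) *
          (posRpow (-p) v * posRpow (m + γ) (u - v)) := by
        rw [weightedConv_eq_setLIntegral]
        refine setLIntegral_mono (by fun_prop) fun v hv => ?_
        calc posExp v * posRpow β (1 - v / T) * posRpow γ (u - v)
            ≤ posRpow (-p) v * (posRpow (-a) (1 - u / T) *
                (ENNReal.ofReal (T ^ (-m)) * posRpow m (u - v))) * posRpow γ (u - v) := by
              gcongr
              exacts [posExp_le_posRpow_neg hp hp1.le v, posRpow_one_sub_div_le_mul β ha hT huT hv]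
          _ = _ := by rw [← posRpow_mul_posRpow m γ]; ring
    _ = _ := by
        rw [lintegral_const_mul _ (by fun_prop), hconv, ENNReal.ofReal_mul (by positivity)]
        ring

lemma horizonIntegrand_le_posRpow (α : ℝ) (ha : 0 ≤ a) (hp : 0 ≤ p) (hp1 : p < 1)
    (hγ : -1 < min (β + a) 0 + γ) (hT : 0 < T) (u : ℝ) :
    horizonIntegrand α β γ T u ≤
      ENNReal.ofReal (T ^ (-min (β + a) 0) * beta (1 - p) (min (β + a) 0 + γ + 1)) ^ 2 *
        (posRpow (2 * α - 2 * a) (1 - u / T) *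
          posRpow (2 * (min (β + a) 0 + γ + 1 - p)) u) := by
  rcases le_or_gt T u with huT | huT
  · simp [horizonIntegrand_eq_zero_of_ge hT huT]
  calc horizonIntegrand α β γ T u
      ≤ posRpow (2 * α) (1 - u / T) * (_ * (posRpow (-a) (1 - u / T) * posRpow _ u)) ^ 2 := by
        rw [horizonIntegrand]
        gcongr
        exact weightedConv_le_posRpow ha hp hp1 hγ hT huT
    _ = _ := by
        rw [mul_pow, mul_pow, posRpow_sq, posRpow_sq, show 2 * α - 2 * a = 2 * α + 2 * -a by ring,
          ← posRpow_mul_posRpow (2 * α)]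
        ring

lemma setLIntegral_Ioi_half_posRpow_mul_posRpow_ne_top {r : ℝ} (hr : -1 < r) (s : ℝ) :
    ∫⁻ y in Set.Ioi (1 / 2), posRpow r (1 - y) * posRpow s y ≠ ∞ := by
  have hbeta := lintegral_posRpow_mul_posRpow_one_sub one_pos (show 0 < r + 1 by linarith)
  refine ne_top_of_le_ne_top (b := ENNReal.ofReal ((1 / 2) ^ (-|s|)) *
    ∫⁻ y, posRpow (1 - 1) y * posRpow (r + 1 - 1) (1 - y)) (by rw [hbeta]; finiteness) ?_
  rw [← lintegral_const_mul _ (by fun_prop)]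
  refine (setLIntegral_mono (by fun_prop) fun y hy => ?_).trans (setLIntegral_le_lintegral _ _)
  rw [add_sub_cancel_right, mul_comm]
  rcases le_or_gt 1 y with hy1 | hy1
  · simp [posRpow_of_nonpos _ (sub_nonpos.2 hy1)]
  rw [posRpow_of_pos (1 - 1) (one_half_pos.trans hy), sub_self, Real.rpow_zero, ENNReal.ofReal_one,
    one_mul]
  gcongr
  exact posRpow_le_rpow_neg_abs s one_half_pos (le_of_lt hy) hy1.le

lemma setLIntegral_Ioi_half_posRpow_div_mul_posRpow (r s : ℝ) (hT : 0 < T) :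
    ∫⁻ u in Set.Ioi (T / 2), posRpow r (1 - u / T) * posRpow s u =
      ENNReal.ofReal (T ^ (s + 1)) *
        ∫⁻ y in Set.Ioi (1 / 2), posRpow r (1 - y) * posRpow s y := by
  have hmem (y : ℝ) : T * y ∈ Set.Ioi (T / 2) ↔ y ∈ Set.Ioi (1 / 2) := by
    rw [Set.mem_Ioi, Set.mem_Ioi, div_eq_mul_one_div, mul_lt_mul_iff_right₀ hT]
  rw [← lintegral_indicator measurableSet_Ioi, lintegral_eq_mul_lintegral_comp_mul_left _ hT,
    ← lintegral_indicator measurableSet_Ioi, Real.rpow_add_one hT.ne', mul_comm (T ^ s),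
    ENNReal.ofReal_mul hT.le, mul_assoc]
  congr 1
  rw [← lintegral_const_mul _ (by measurability)]
  refine lintegral_congr fun y => ?_
  simp only [Set.indicator_apply, hmem, mul_div_cancel_left₀ _ hT.ne', posRpow_mul_left hT s y,
    mul_left_comm (posRpow r _), mul_ite, mul_zero]

lemma setLIntegral_Ioi_half_horizonIntegrand_le (α : ℝ) (ha : 0 ≤ a) (hp : 0 ≤ p) (hp1 : p < 1)
    (hγ : -1 < min (β + a) 0 + γ) (hT : 0 < T) :
    ∫⁻ u in Set.Ioi (T / 2), horizonIntegrand α β γ T u ≤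
      ENNReal.ofReal (T ^ (2 * γ + 3 - 2 * p)) *
        (ENNReal.ofReal (beta (1 - p) (min (β + a) 0 + γ + 1)) ^ 2 *
          ∫⁻ y in Set.Ioi (1 / 2), posRpow (2 * α - 2 * a) (1 - y) *
            posRpow (2 * (min (β + a) 0 + γ + 1 - p)) y) := by
  refine (lintegral_mono fun u => horizonIntegrand_le_posRpow α ha hp hp1 hγ hT u).trans_eq ?_
  set m := min (β + a) 0
  have hpow : T ^ (2 * γ + 3 - 2 * p) = (T ^ (-m)) ^ 2 * T ^ (2 * (m + γ + 1 - p) + 1) := by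
    rw [← Real.rpow_mul_natCast hT.le, ← Real.rpow_add hT]
    push_cast
    ring_nf
  rw [lintegral_const_mul _ (by fun_prop), setLIntegral_Ioi_half_posRpow_div_mul_posRpow _ _ hT,
    ENNReal.ofReal_mul (by positivity), mul_pow, ← ENNReal.ofReal_pow (by positivity), hpow,
    ENNReal.ofReal_mul (by positivity)]
  ring

-- The bound is of order `T ^ (2γ + 3 - 2p)`; the conditions on `a` keep the homogeneous integrals
-- finite, and `p > γ + 3/2` makes the power of `T` negative.
lemma tendsto_setLIntegral_Ioi_horizonIntegrand (hα : -(1 / 2) < α)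
    (hαβγ : -(3 / 2) < α + β + γ) (hγ : -1 < γ) (hγ' : γ < -(1 / 2)) :
    Tendsto (fun T => ∫⁻ u in Set.Ioi (T / 2), horizonIntegrand α β γ T u) atTop (𝓝 0) := by
  obtain ⟨a, ha, haα⟩ : ∃ a, max 0 (-(β + γ + 1)) < a ∧ a < α + 1 / 2 :=
    exists_between (max_lt (by linarith) (by linarith))
  obtain ⟨ha0, haβγ⟩ := max_lt_iff.1 ha
  obtain ⟨p, hp, hp1⟩ : ∃ p, γ + 3 / 2 < p ∧ p < 1 := exists_between (by linarith)
  have hmγ : -1 < min (β + a) 0 + γ := by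
    rw [min_add]
    exact lt_min (by linarith) (by linarith)
  have hfin := setLIntegral_Ioi_half_posRpow_mul_posRpow_ne_top (r := 2 * α - 2 * a) (by linarith)
    (2 * (min (β + a) 0 + γ + 1 - p))
  have hpow : Tendsto (fun T : ℝ => ENNReal.ofReal (T ^ (2 * γ + 3 - 2 * p))) atTop (𝓝 0) := by
    simpa using ENNReal.tendsto_ofReal
      (tendsto_rpow_neg_atTop (y := -(2 * γ + 3 - 2 * p)) (by linarith))
  refine tendsto_of_tendsto_of_tendsto_of_le_of_le' tendsto_const_nhds ?_
    (Eventually.of_forall fun T => zero_le) ((eventually_gt_atTop 0).mono fun T hT =>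
      setLIntegral_Ioi_half_horizonIntegrand_le α ha0.le (by linarith) hp1 hmγ hT)
  simpa only [zero_mul] using ENNReal.Tendsto.mul_const hpow (Or.inr (by finiteness))

lemma tendsto_lintegral_horizonIntegrand (hα : -(1 / 2) < α) (hαβγ : -(3 / 2) < α + β + γ)
    (hγ : -1 < γ) (hγ' : γ < -(1 / 2)) :
    Tendsto (fun T => ∫⁻ u, horizonIntegrand α β γ T u) atTop
      (𝓝 (ENNReal.ofReal (beta (γ + 1) (-2 * γ - 1) * Real.Gamma (2 * γ + 2)))) := by
  rw [← lintegral_lconvolution_posExp_posRpow_sq hγ hγ', ← add_zero (∫⁻ _, _)]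
  refine ((tendsto_setLIntegral_Iic_horizonIntegrand α β hγ hγ').add
    (tendsto_setLIntegral_Ioi_horizonIntegrand hα hαβγ hγ hγ')).congr fun T => ?_
  rw [← Set.compl_Iic, lintegral_add_compl _ measurableSet_Iic]

lemma intervalIntegral_eq_toReal_weightedConv (β γ : ℝ) (hT : 0 < T) (hu : 0 ≤ u) (huT : u ≤ T) :
    ∫ v in (0 : ℝ)..u, Real.exp (-v) * (1 - v / T) ^ β * (u - v) ^ γ =
      (weightedConv β γ T u).toReal := by
  have hpos {v : ℝ} (hv : v ∈ Set.Ioo 0 u) : 0 < 1 - v / T ∧ 0 < u - v :=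
    ⟨sub_pos.2 ((div_lt_one hT).2 (hv.2.trans_le huT)), sub_pos.2 hv.2⟩
  rw [integral_of_le hu, integral_Ioc_eq_integral_Ioo, weightedConv_eq_setLIntegral,
    integral_eq_lintegral_of_nonneg_ae _ (by fun_prop)]
  · congr 1
    refine setLIntegral_congr_fun measurableSet_Ioo fun v hv => ?_
    obtain ⟨hvT, hvu⟩ := hpos hv
    rw [posExp_of_pos hv.1, posRpow_of_pos _ hvT, posRpow_of_pos _ hvu,
      ENNReal.ofReal_mul (by positivity), ENNReal.ofReal_mul (by positivity)]
  · filter_upwards [ae_restrict_mem measurableSet_Ioo] with v hv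
    obtain ⟨hvT, hvu⟩ := hpos hv
    positivity

lemma intervalIntegral_eq_toReal_lintegral_horizonIntegrand (α β : ℝ) (hγ : -1 < γ) (hT : 0 < T) :
    ∫ u in (0 : ℝ)..T, (1 - u / T) ^ (2 * α) *
        (∫ v in (0 : ℝ)..u, Real.exp (-v) * (1 - v / T) ^ β * (u - v) ^ γ) ^ 2 =
      (∫⁻ u, horizonIntegrand α β γ T u).toReal := by
  have hsupp : Function.support (horizonIntegrand α β γ T) ⊆ Set.Ioo 0 T := fun u hu =>
    ⟨not_le.1 fun h => hu (horizonIntegrand_eq_zero_of_nonpos h),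
      not_le.1 fun h => hu (horizonIntegrand_eq_zero_of_ge hT h)⟩
  have hfin (u : ℝ) (hu : u ∈ Set.Ioo 0 T) : horizonIntegrand α β γ T u < ∞ :=
    ENNReal.mul_lt_top (posRpow_ne_top _ _).lt_top
      (ENNReal.pow_lt_top (weightedConv_ne_top hγ hT hu.2).lt_top)
  rw [← setLIntegral_eq_of_support_subset hsupp, ← integral_toReal (by fun_prop)
    ((ae_restrict_mem measurableSet_Ioo).mono hfin), integral_of_le hT.le,
    integral_Ioc_eq_integral_Ioo]
  refine setIntegral_congr_fun measurableSet_Ioo fun u hu => ?_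
  have huT : 0 < 1 - u / T := sub_pos.2 ((div_lt_one hT).2 hu.2)
  simp only [intervalIntegral_eq_toReal_weightedConv β γ hT hu.1.le hu.2.le, horizonIntegrand,
    posRpow_of_pos _ huT, ENNReal.toReal_mul, ENNReal.toReal_pow]
  rw [ENNReal.toReal_ofReal (by positivity)]


lemma intervalIntegral_exp_mul_rpow_mul_sub_rpow (β γ : ℝ) (hθ : 0 < θ) (hT : 0 < T)
    (hu : 0 ≤ u) (huT : u ≤ θ * T) :
    ∫ t in (T - u / θ)..T, Real.exp (θ * t) * t ^ β * (t - (T - u / θ)) ^ γ =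
      θ ^ (-(γ + 1)) * Real.exp (θ * T) * T ^ β *
        ∫ v in (0 : ℝ)..u, Real.exp (-v) * (1 - v / (θ * T)) ^ β * (u - v) ^ γ := by
  have hsubst := integral_comp_sub_div (a := 0) (b := u)
    (fun t => Real.exp (θ * t) * t ^ β * (t - (T - u / θ)) ^ γ) hθ.ne' T
  rw [zero_div, sub_zero, smul_eq_mul] at hsubst
  rw [← mul_right_inj' hθ.ne', ← hsubst, ← intervalIntegral.integral_const_mul,
    ← intervalIntegral.integral_const_mul]
  refine integral_congr fun v hv => ?_
  rw [Set.uIcc_of_le hu] at hv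
  have hexp : Real.exp (θ * (T - v / θ)) = Real.exp (θ * T) * Real.exp (-v) := by
    rw [← Real.exp_add]
    field_simp
    ring_nf
  have hbase : (T - v / θ) ^ β = T ^ β * (1 - v / (θ * T)) ^ β := by
    rw [← Real.mul_rpow hT.le
      (sub_nonneg.2 ((div_le_one (by positivity)).2 (hv.2.trans huT)))]
    field_simp
  have hkernel : (T - v / θ - (T - u / θ)) ^ γ = θ * θ ^ (-(γ + 1)) * (u - v) ^ γ := by
    rw [sub_sub_sub_cancel_left, ← sub_div, Real.div_rpow (sub_nonneg.2 hv.2) hθ.le, neg_add',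
      Real.rpow_sub_one hθ.ne', mul_div_cancel₀ _ hθ.ne', Real.rpow_neg hθ.le, div_eq_inv_mul]
  simp only [hexp, hbase, hkernel]
  ring

lemma mul_intervalIntegral_rpow_mul_sq_eq (α β : ℝ) (hγ : -1 < γ) (hθ : 0 < θ) (hT : 0 < T) :
    θ * ∫ s in (0 : ℝ)..T, s ^ (2 * α) *
        (∫ t in s..T, Real.exp (θ * t) * t ^ β * (t - s) ^ γ) ^ 2 =
      T ^ (2 * α) * (θ ^ (-(γ + 1)) * Real.exp (θ * T) * T ^ β) ^ 2 *
        (∫⁻ u, horizonIntegrand α β γ (θ * T) u).toReal := by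
  have hsubst := integral_comp_sub_div (a := 0) (b := θ * T) (fun s => s ^ (2 * α) *
    (∫ t in s..T, Real.exp (θ * t) * t ^ β * (t - s) ^ γ) ^ 2) hθ.ne' T
  rw [zero_div, sub_zero, mul_div_cancel_left₀ _ hθ.ne', sub_self, smul_eq_mul] at hsubst
  rw [← hsubst, ← intervalIntegral_eq_toReal_lintegral_horizonIntegrand α β hγ (by positivity),
    ← intervalIntegral.integral_const_mul]
  refine integral_congr fun u hu => ?_
  rw [Set.uIcc_of_le (by positivity)] at hu
  have hbase : (T - u / θ) ^ (2 * α) = T ^ (2 * α) * (1 - u / (θ * T)) ^ (2 * α) := by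
    rw [← Real.mul_rpow hT.le (sub_nonneg.2 ((div_le_one (by positivity)).2 hu.2))]
    field_simp
  simp only [intervalIntegral_exp_mul_rpow_mul_sub_rpow β γ hθ hT hu.1 hu.2, hbase]
  ring

lemma secondMoment_div_rpow_eq (α β : ℝ) (hγ : -1 < γ) (hθ : 0 < θ) (hT : 0 < T) :
    (Real.exp (-(2 * θ * T)) * ∫ s in (0 : ℝ)..T, s ^ (2 * α) *
      (∫ t in s..T, Real.exp (θ * t) * t ^ β * (t - s) ^ γ) ^ 2) / T ^ (2 * α + 2 * β) =
      (∫⁻ u, horizonIntegrand α β γ (θ * T) u).toReal / θ ^ (2 * γ + 3) := by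
  have hexp : Real.exp (-(2 * θ * T)) * Real.exp (θ * T) ^ 2 = 1 := by
    rw [← Real.exp_nat_mul, ← Real.exp_add]
    simp [mul_assoc]
  have hTpow : T ^ (2 * α + 2 * β) = T ^ (2 * α) * (T ^ β) ^ 2 := by
    rw [Real.rpow_add hT, ← Real.rpow_mul_natCast hT.le, mul_comm β, Nat.cast_ofNat]
  have hθpow : θ ^ (2 * γ + 3) * (θ ^ (-(γ + 1))) ^ 2 = θ := by
    rw [← Real.rpow_mul_natCast hθ.le, ← Real.rpow_add hθ]
    ring_nf
    exact Real.rpow_one θ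
  rw [div_eq_div_iff (by positivity) (by positivity), ← mul_right_inj' hθ.ne', hTpow]
  linear_combination
    Real.exp (-(2 * θ * T)) * θ ^ (2 * γ + 3) * mul_intervalIntegral_rpow_mul_sq_eq α β hγ hθ hT +
    T ^ (2 * α) * (T ^ β) ^ 2 * (∫⁻ u, horizonIntegrand α β γ (θ * T) u).toReal *
      (θ ^ (2 * γ + 3) * (θ ^ (-(γ + 1))) ^ 2 * hexp + hθpow)

end Horizon

/-- Lemma 4.5, case `γ ∈ (-1, -1/2)`: asymptotics of
`E(e^{-θT} ∫₀ᵀ e^{θs} dX_s)²`. -/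
theorem stmt_15 (α β γ θ : ℝ) (hα : -(1/2 : ℝ) < α)
    (hαβγ : -(3/2 : ℝ) < α + β + γ) (hγ : -1 < γ) (hγ' : γ < -(1/2 : ℝ))
    (hθ : 0 < θ)
    (G : ℝ → ℝ)
    (hG : ∀ T : ℝ, G T = Real.exp (-(2 * θ * T)) * ∫ s in (0:ℝ)..T, s ^ (2*α) *
      (∫ t in s..T, Real.exp (θ * t) * t ^ β * (t - s) ^ γ) ^ 2) :
    Tendsto (fun T : ℝ => G T / T ^ (2*α+2*β)) atTop
      (nhds ((Real.Gamma (γ+1) * Real.Gamma (-2*γ-1) * Real.Gamma (2*γ+2)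
        / Real.Gamma (-γ)) / θ ^ (2*γ+3))) := by
  have hβ : 0 < beta (γ + 1) (-2 * γ - 1) := beta_pos (by linarith) (by linarith)
  have hΓ : 0 < Real.Gamma (2 * γ + 2) := Real.Gamma_pos_of_pos (by linarith)
  have hconst : beta (γ + 1) (-2 * γ - 1) * Real.Gamma (2 * γ + 2) =
      Real.Gamma (γ + 1) * Real.Gamma (-2 * γ - 1) * Real.Gamma (2 * γ + 2) / Real.Gamma (-γ) := by
    rw [beta, show γ + 1 + (-2 * γ - 1) = -γ by ring, div_mul_eq_mul_div]
  have hlim := (ENNReal.tendsto_toReal ENNReal.ofReal_ne_top).comp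
    ((tendsto_lintegral_horizonIntegrand hα hαβγ hγ hγ').comp
      (tendsto_id.const_mul_atTop hθ))
  rw [ENNReal.toReal_ofReal (by positivity), hconst] at hlim
  refine (hlim.div_const (θ ^ (2 * γ + 3))).congr' ?_
  filter_upwards [eventually_gt_atTop 0] with T hT
  rw [hG, secondMoment_div_rpow_eq α β hγ hθ hT]
  rfl
end
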